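/- Let B ⊂ A be a regular inclusion of simple unital C*-algebras with a finite-index conditional expectation, and let E₀ : A → B be the minimal conditional expectation. Then E₀ maps C_A(B) into ℂ·1, and the faithful tracial state τ₀ on C_A(B) determined by E₀(z) = τ₀(z)·1 admits a unitary orthonormal quasi-basis: there exist finitely many unitaries w_1, …, w_n ∈ C_A(B) such that τ₀(w_i* w_j) = δ_{ij} for all i, j and z = Σ_i τ₀(z w_i) w_i* for every z ∈ C_A(B). -/

import Mathlib

/-!
Write `C` for the centralizer of `B`, `λᵢ` for a quasi-basis of the minimal expectation `E₀`, and
`r₀` for its index. Simplicity makes the centres of `B` and of the ambient algebra trivial, so both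
`E₀(z)` and `∑ λᵢ z λᵢ*` are scalars for `z ∈ C`.

Minimality is used through its first-order condition. For self-adjoint `x ∈ C` and small real `ε`,
`y ↦ E₀((1 + ε x) y (1 + ε x))`, suitably normalized, is again an expectation onto `B`, and
differentiating its index at `ε = 0` gives `∑ λᵢ x λᵢ* = r₀ E₀(x)` (`IsCondExp.minimal_sum`). This
identity forces the modular automorphism of `E₀` on `C` to be trivial, so `E₀(c x) = E₀(x c)` for
`c ∈ C` (`IsCondExp.tracial`), and it characterizes `E₀` among the expectations tracial on `C` with
index `r₀` (`IsCondExp.unique_tracial`). Conjugating `E₀` by a unitary of the normalizer gives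
another such expectation, so `E₀` is invariant (`IsCondExp.conj_invariant`). In particular the
trace `τ₀` on `C` is invariant under conjugation by the normalizer.

The Pimsner–Popa inequality `‖x‖² ≤ K ‖E₀(x* x)‖` makes `C` behave as a finite-dimensional algebra:
self-adjoint elements have finite spectrum, corners of minimal projections are scalar, and `1` is a
finite sum of minimal projections. Regularity and simplicity give, for nonzero `p, q`, a
normalizing unitary `u` with `p u q ≠ 0` (`exists_link`), so conjugation by the normalizer permutes
the matrix blocks of `C` transitively. Hence all minimal projections have the same trace and all
blocks the same size `k`, that is, `C ≅ ⨁ M_k` with a uniform trace. Such an algebra has an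
orthonormal basis of Weyl-type unitaries, the products of the diagonal unitaries given by the
characters of `ZMod N` (`N` the number of minimal projections) with `k` permutation-like unitaries
decomposing the equivalence relation on those projections (`exists_unitary_basis`).
-/

namespace RegularInclusion

variable {A : Type*} [NormedRing A] [StarRing A] [CStarRing A] [CompleteSpace A]
  [NormedAlgebra ℂ A] [StarModule ℂ A]

/-- A conditional expectation of `A` onto the subset `B`: a `ℂ`-linear positive
`B`-bimodular projection of `A` onto `B`. -/
def IsCondExp (B : Set A) (E : A →ₗ[ℂ] A) : Prop :=
  (∀ x, E x ∈ B) ∧ (∀ b ∈ B, E b = b) ∧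
  (∀ x, ∃ y, E (star x * x) = star y * y) ∧
  (∀ b₁ ∈ B, ∀ b₂ ∈ B, ∀ x, E (b₁ * x * b₂) = b₁ * E x * b₂)

/-- `l` is a right quasi-basis for `E`, witnessing finite index. -/
def IsRightQB (E : A →ₗ[ℂ] A) {n : ℕ} (l : Fin n → A) : Prop :=
  ∀ x, x = ∑ i, E (x * l i) * star (l i)

/-- The centralizer (relative commutant) `C_A(B)` of `B` in `A`. -/
def cent (B : Set A) : Set A := {x | ∀ b ∈ B, x * b = b * x}

/-- The normalizer `N_A(B) = {u ∈ U(A) : uBu* = B}` of `B` in `A`. -/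
def normalizer (B : Set A) : Set A :=
  {u | u ∈ unitary A ∧ (fun x => u * x * star u) '' B = B}

/-- The set `U(B)` of unitaries of `B`. -/
def UB (B : Set A) : Set A := {b | b ∈ B ∧ b ∈ unitary A}

/-- The set `U(B)·U(C_A(B))` of products of a unitary of `B` and a unitary of
the centralizer of `B`. -/
def UBC (B : Set A) : Set A :=
  {x | ∃ b c, b ∈ B ∧ b ∈ unitary A ∧ c ∈ cent B ∧ c ∈ unitary A ∧ x = b * c}

/-- Simplicity of the C*-algebra (given as the subset `S` of `A`): the only closed
two-sided ideals of `S` are `{0}` and `S`. -/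
def IsSimpleCStar (S : Set A) : Prop :=
  ∀ I : Set A, I ⊆ S → IsClosed I → (0 : A) ∈ I →
    (∀ x ∈ I, ∀ y ∈ I, x + y ∈ I) →
    (∀ x ∈ I, ∀ b ∈ S, x * b ∈ I ∧ b * x ∈ I) →
    I = {0} ∨ I = S

/-- The intermediate C*-subalgebra `C := C*(B ∪ C_A(B))` generated by `B` and the
centralizer of `B`. -/
def genC (B : Set A) : StarSubalgebra ℂ A :=
  (StarAlgebra.adjoin ℂ (B ∪ cent B)).topologicalClosure

/-- Regularity of the inclusion `B ⊆ A`: the normalizer of `B` generates `A` as a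
C*-algebra. -/
def IsRegular (B : Set A) : Prop :=
  (StarAlgebra.adjoin ℂ (normalizer B)).topologicalClosure = ⊤

/-- `E₀` is the minimal conditional expectation of `A` onto `B`: the finite-index
conditional expectation whose (scalar) Watatani index is least among all finite-index
conditional expectations onto `B`. -/
def IsMinimalCondExp (B : Set A) (E₀ : A →ₗ[ℂ] A) : Prop :=
  IsCondExp B E₀ ∧
  ∃ (r₀ : ℝ) (n : ℕ) (l : Fin n → A), IsRightQB E₀ l ∧
    (∑ i, l i * star (l i)) = (r₀ : ℂ) • 1 ∧
    ∀ E : A →ₗ[ℂ] A, IsCondExp B E → ∀ (m : ℕ) (μ : Fin m → A), IsRightQB E μ →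
      ∀ r : ℝ, (∑ i, μ i * star (μ i)) = (r : ℂ) • 1 → r₀ ≤ r

/-! ### C⋆-algebras with a bounding trace -/

section Structure

variable {C : Type*} [CStarAlgebra C]

/-- A nonzero projection with no proper nonzero subprojection. -/
def IsMinProj (p : C) : Prop :=
  IsStarProjection p ∧ p ≠ 0 ∧ ∀ e, IsStarProjection e → p * e = e → e = 0 ∨ e = p

/-- A tracial state `τ` satisfying the Pimsner–Popa type estimate `‖x‖² ≤ K τ(x* x)`, which in
particular makes it faithful. -/
structure IsBoundingTrace (τ : C →ₗ[ℂ] ℂ) (K : ℝ) : Prop where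
  map_one : τ 1 = 1
  comm : ∀ x y, τ (x * y) = τ (y * x)
  im_zero : ∀ x, (τ (star x * x)).im = 0
  re_nonneg : ∀ x, 0 ≤ (τ (star x * x)).re
  bound : ∀ x, ‖x‖ ^ 2 ≤ K * (τ (star x * x)).re

namespace IsBoundingTrace

variable {τ : C →ₗ[ℂ] ℂ} {K : ℝ}

lemma nontrivial (h : IsBoundingTrace τ K) : Nontrivial C := by
  by_contra hn
  rw [not_nontrivial_iff_subsingleton] at hn
  have h1 := h.map_one
  rw [Subsingleton.elim (1 : C) 0, map_zero] at h1
  exact zero_ne_one h1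

lemma K_pos (h : IsBoundingTrace τ K) : 0 < K := by
  have := h.nontrivial
  have h1 := h.bound 1
  simp [h.map_one] at h1
  linarith

lemma proj_re (h : IsBoundingTrace τ K) {p : C} (hp : IsStarProjection p) :
    0 ≤ (τ p).re ∧ (τ p).im = 0 := by
  have h1 := h.re_nonneg p
  have h2 := h.im_zero p
  rw [hp.isSelfAdjoint.star_eq, hp.isIdempotentElem.eq] at h1 h2
  exact ⟨h1, h2⟩

lemma proj_lower (h : IsBoundingTrace τ K) {p : C} (hp : IsStarProjection p) (h0 : p ≠ 0) :
    1 ≤ K * (τ p).re := by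
  have h1 := h.bound p
  rw [hp.isSelfAdjoint.star_eq, hp.isIdempotentElem.eq] at h1
  have h2 : ‖p‖ * ‖p‖ = ‖p‖ := by
    have := CStarRing.norm_star_mul_self (x := p)
    rw [hp.isSelfAdjoint.star_eq, hp.isIdempotentElem.eq] at this
    exact this.symm
  have h3 : ‖p‖ = 1 := by
    have : ‖p‖ ≠ 0 := norm_ne_zero_iff.mpr h0
    exact mul_left_cancel₀ this (by rw [h2, mul_one])
  simpa [h3] using h1

/-- Points of the spectrum give, through disjointly supported bump functions, orthogonal elements
of norm at least one; each of them has trace at least `1 / K`, so there are at most `K` of them. -/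
lemma finite_spectrum (h : IsBoundingTrace τ K) {x : C} (hx : IsSelfAdjoint x) :
    (spectrum ℝ x).Finite := by
  have hnt := h.nontrivial
  let _ : PartialOrder C := CStarAlgebra.spectralOrder C
  have _ : StarOrderedRing C := CStarAlgebra.spectralOrderedRing C
  by_contra hinf
  obtain ⟨n, hn⟩ := exists_nat_gt K
  obtain ⟨t, htS, htn⟩ := Set.Infinite.exists_subset_card_eq hinf n
  obtain ⟨δ, hδ, hsep⟩ : ∃ δ : ℝ, 0 < δ ∧ ∀ a ∈ t, ∀ b ∈ t, a ≠ b → 2 * δ ≤ |a - b| := by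
    by_cases hne : t.offDiag.Nonempty
    · obtain ⟨m, hm, hmin⟩ := t.offDiag.exists_min_image (fun q => |q.1 - q.2|) hne
      rw [Finset.mem_offDiag] at hm
      refine ⟨|m.1 - m.2| / 2, half_pos (abs_pos.mpr (sub_ne_zero.mpr hm.2.2)), ?_⟩
      intro a ha b hb hab
      have := hmin (a, b) (Finset.mem_offDiag.mpr ⟨ha, hb, hab⟩)
      simp only at this
      linarith
    · refine ⟨1, one_pos, fun a ha b hb hab => ?_⟩
      exact absurd ⟨(a, b), Finset.mem_offDiag.mpr ⟨ha, hb, hab⟩⟩ hne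
  let f : ℝ → ℝ → ℝ := fun a s => max 0 (1 - |s - a| / δ)
  have hfc : ∀ a, Continuous (f a) := fun a => by fun_prop
  have hf0 : ∀ a s, 0 ≤ f a s := fun a s => le_max_left _ _
  have hf1 : ∀ a s, f a s ≤ 1 := fun a s => by
    refine max_le zero_le_one ?_
    have : 0 ≤ |s - a| / δ := by positivity
    linarith
  have hfz : ∀ a s, f a s ≠ 0 → |s - a| < δ := by
    intro a s hne
    by_contra hcon
    push Not at hcon
    apply hne
    have : 1 ≤ |s - a| / δ := (one_le_div hδ).mpr hcon
    exact max_eq_left (by linarith)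
  have hsum : ∀ s, ∑ a ∈ t, f a s * f a s ≤ 1 := by
    intro s
    by_cases hex : ∃ a ∈ t, f a s ≠ 0
    · obtain ⟨a, ha, hane⟩ := hex
      rw [Finset.sum_eq_single_of_mem a ha]
      · nlinarith [hf0 a s, hf1 a s]
      · intro b hb hba
        by_contra hcon
        have hb0 : f b s ≠ 0 := fun h0 => hcon (by rw [h0, zero_mul])
        have h1 := hfz a s hane
        have h2 := hfz b s hb0
        have h3 := hsep b hb a ha hba
        have h4 : |b - a| ≤ |s - a| + |s - b| := by
          have := abs_sub (s - a) (s - b)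
          simpa using this
        linarith
    · push Not at hex
      rw [Finset.sum_eq_zero]
      · exact zero_le_one
      · intro a ha
        rw [hex a ha, zero_mul]
  have hb : ∀ a ∈ t, 1 ≤ K * (τ (cfc (f a) x * cfc (f a) x)).re := by
    intro a ha
    have hmem : (1 : ℝ) ∈ spectrum ℝ (cfc (f a) x) := by
      rw [cfc_map_spectrum (f a) x hx (hfc a).continuousOn]
      exact ⟨a, htS ha, by simp [f]⟩
    have h1 : (1 : ℝ) ≤ ‖cfc (f a) x‖ := by
      simpa using spectrum.norm_le_norm_of_mem hmem
    have h2 := h.bound (cfc (f a) x)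
    have hsa : IsSelfAdjoint (cfc (f a) x) := cfc_predicate (f a) x
    rw [hsa.star_eq] at h2
    nlinarith
  have htot : (∑ a ∈ t, (τ (cfc (f a) x * cfc (f a) x)).re) ≤ 1 := by
    have hcf : cfc (fun s => 1 - ∑ a ∈ t, f a s * f a s) x
        = 1 - ∑ a ∈ t, cfc (f a) x * cfc (f a) x := by
      rw [cfc_sub (fun _ => (1 : ℝ)) (fun s => ∑ a ∈ t, f a s * f a s) x (by fun_prop)
        (by exact (continuous_finsetSum _ fun a _ => (hfc a).mul (hfc a)).continuousOn)]
      congr 1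
      · rw [cfc_const (1 : ℝ) x hx, _root_.map_one]
      · have := cfc_sum (fun a s => f a s * f a s) x t
          (fun a _ => ((hfc a).mul (hfc a)).continuousOn)
        have h2 : (∑ a ∈ t, fun s => f a s * f a s) = fun s => ∑ a ∈ t, f a s * f a s := by
          ext s; simp
        rw [h2] at this
        rw [this]
        refine Finset.sum_congr rfl fun a _ => ?_
        rw [cfc_mul (f a) (f a) x (hfc a).continuousOn (hfc a).continuousOn]
    have hnn : 0 ≤ cfc (fun s => 1 - ∑ a ∈ t, f a s * f a s) x :=
      cfc_nonneg fun s _ => sub_nonneg.mpr (hsum s)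
    obtain ⟨y, hy⟩ := CStarAlgebra.nonneg_iff_eq_star_mul_self.mp hnn
    have h1 := h.re_nonneg y
    rw [← hy, hcf, map_sub, h.map_one, map_sum, Complex.sub_re, Complex.re_sum] at h1
    simp only [Complex.one_re] at h1
    linarith
  have hfin : (t.card : ℝ) ≤ K * ∑ a ∈ t, (τ (cfc (f a) x * cfc (f a) x)).re := by
    rw [Finset.mul_sum]
    have := Finset.sum_le_sum hb
    simpa using this
  have := h.K_pos
  rw [htn] at hfin
  nlinarith

/-- The corner of a minimal projection is one-dimensional. -/
lemma corner (h : IsBoundingTrace τ K) {p : C} (hp : IsMinProj p) (x : C) :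
    ∃ c : ℂ, p * x * p = c • p := by
  have hpp := hp.1.isIdempotentElem.eq
  have hps := hp.1.isSelfAdjoint.star_eq
  have key : ∀ y : C, IsSelfAdjoint y → p * y = y → y * p = y → ∃ c : ℂ, y = c • p := by
    intro y hy hpy hyp
    by_cases hy0 : y = 0
    · exact ⟨0, by simp [hy0]⟩
    obtain ⟨s, hs, hs0⟩ : ∃ s ∈ spectrum ℝ y, s ≠ 0 := by
      by_contra hcon
      push Not at hcon
      exact hy0 (CFC.eq_zero_of_spectrum_subset_zero (R := ℝ) y (fun s hs => hcon s hs) hy)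
    have hfin := h.finite_spectrum hy
    have hc : ∀ f : ℝ → ℝ, ContinuousOn f (spectrum ℝ y) := fun f => hfin.continuousOn f
    let f : ℝ → ℝ := fun r => if r = s then 1 else 0
    let e : C := cfc f y
    have he : IsStarProjection e := by
      refine ⟨?_, cfc_predicate f y⟩
      change cfc f y * cfc f y = cfc f y
      rw [← cfc_mul f f y (hc _) (hc _)]
      congr 1
      ext r
      simp [f]
    have hye : y * e = s • e := by
      have h1 : cfc (fun r => r * f r) y = y * e := by
        rw [cfc_mul (fun r => r) f y (hc _) (hc _), cfc_id' ℝ y]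
      have h2 : cfc (fun r => s * f r) y = s • e := by
        rw [cfc_const_mul s f y (hc _)]
      rw [← h1, ← h2]
      congr 1
      ext r
      by_cases hr : r = s <;> simp [f, hr]
    have hpe : p * e = e := by
      have h1 : e = s⁻¹ • (y * e) := by rw [hye, smul_smul, inv_mul_cancel₀ hs0, one_smul]
      rw [h1, mul_smul_comm, ← mul_assoc, hpy]
    have hne : e ≠ 0 := by
      intro h0
      have h1 : (1 : ℝ) ∈ spectrum ℝ e := by
        rw [cfc_map_spectrum f y hy (hc _)]
        exact ⟨s, hs, by simp [f]⟩
      have := h.nontrivial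
      rw [h0, spectrum.zero_eq] at h1
      simp at h1
    rcases hp.2.2 e he hpe with h0 | h0
    · exact absurd h0 hne
    · refine ⟨(s : ℂ), ?_⟩
      rw [h0, hyp] at hye
      rw [hye]
      simp
  obtain ⟨a, ha⟩ := key (p * (realPart x : C) * p)
    (by
      have := (realPart x).2
      rw [selfAdjoint.mem_iff] at this
      simp [IsSelfAdjoint, hps, this, mul_assoc])
    (by simp only [← mul_assoc, hpp]) (by rw [mul_assoc, hpp])
  obtain ⟨b, hb⟩ := key (p * (imaginaryPart x : C) * p)
    (by
      have := (imaginaryPart x).2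
      rw [selfAdjoint.mem_iff] at this
      simp [IsSelfAdjoint, hps, this, mul_assoc])
    (by simp only [← mul_assoc, hpp]) (by rw [mul_assoc, hpp])
  refine ⟨a + Complex.I * b, ?_⟩
  conv_lhs => rw [← realPart_add_I_smul_imaginaryPart x]
  rw [mul_add, add_mul, ha, mul_smul_comm, smul_mul_assoc, hb, add_smul, smul_smul]

lemma eq_zero (h : IsBoundingTrace τ K) {x : C} (hx : τ (star x * x) = 0) : x = 0 := by
  have := h.bound x
  rw [hx] at this
  simp at this
  exact this

/-- A nonzero element between two minimal projections is, up to a scalar, a partial isometry. -/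
lemma exists_partial_isometry (h : IsBoundingTrace τ K) {p q x : C} (hp : IsMinProj p)
    (hq : IsMinProj q) (hx : x ≠ 0) (hpx : p * x = x) (hxq : x * q = x) :
    ∃ v : C, v * star v = p ∧ star v * v = q := by
  have hps := hp.1.isSelfAdjoint.star_eq
  have hqs := hq.1.isSelfAdjoint.star_eq
  have hxp : star x * p = star x := by
    have := congrArg star hpx
    rwa [star_mul, hps] at this
  have hqx : q * star x = star x := by
    have := congrArg star hxq
    rwa [star_mul, hqs] at this
  obtain ⟨c, hc⟩ := h.corner hp (x * star x)
  obtain ⟨d, hd⟩ := h.corner hq (star x * x)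
  have hc' : x * star x = c • p := by
    rw [← hc, ← mul_assoc, hpx, mul_assoc, hxp]
  have hd' : star x * x = d • q := by
    rw [← hd, ← mul_assoc, hqx, mul_assoc, hxq]
  have hcd : c = d := by
    have h1 : x * star x * x = c • x := by rw [hc', smul_mul_assoc, hpx]
    have h2 : x * star x * x = d • x := by rw [mul_assoc, hd', mul_smul_comm, hxq]
    exact smul_left_injective ℂ hx (h1.symm.trans h2)
  have hτ : τ (star x * x) = d * τ q := by rw [hd', map_smul, smul_eq_mul]
  have hq1 := h.proj_re hq.1
  have hq2 := h.proj_lower hq.1 hq.2.1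
  have hx1 := h.re_nonneg x
  have hx2 := h.im_zero x
  have hx3 := h.bound x
  rw [hτ] at hx1 hx2 hx3
  simp only [Complex.mul_re, Complex.mul_im, hq1.2] at hx1 hx2 hx3
  have hK := h.K_pos
  have hqpos : 0 < (τ q).re := by
    by_contra hcon
    nlinarith
  have hdim : d.im = 0 := by
    have : d.im * (τ q).re = 0 := by linarith
    exact (mul_eq_zero.mp this).resolve_right hqpos.ne'
  have hdpos : 0 < d.re := by
    have hn : 0 < ‖x‖ ^ 2 := by positivity
    by_contra hcon
    push Not at hcon
    have : d.re * (τ q).re ≤ 0 := mul_nonpos_of_nonpos_of_nonneg hcon hqpos.le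
    nlinarith
  have hdre : d = (d.re : ℂ) := Complex.ext (by simp) (by simp [hdim])
  set r : ℝ := (Real.sqrt d.re)⁻¹ with hr
  have hrr : r * r * d.re = 1 := by
    rw [hr, ← mul_inv, Real.mul_self_sqrt hdpos.le, inv_mul_cancel₀ hdpos.ne']
  have hrc : (r : ℂ) * ((r : ℂ) * d) = 1 := by
    rw [hdre, ← mul_assoc]
    exact_mod_cast hrr
  refine ⟨(r : ℂ) • x, ?_, ?_⟩
  · rw [star_smul, smul_mul_smul_comm, hc', smul_smul, hcd]
    simp [mul_assoc, hrc]
  · rw [star_smul, smul_mul_smul_comm, hd', smul_smul]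
    simp [mul_assoc, hrc]

/-- Every projection is a finite sum of minimal ones: splitting terminates because each nonzero
projection has trace at least `1 / K`. -/
lemma exists_decomposition (h : IsBoundingTrace τ K) (n : ℕ) :
    ∀ p : C, IsStarProjection p → K * (τ p).re < n →
      ∃ (ι : Type) (_ : Fintype ι) (f : ι → C), (∀ i, IsMinProj (f i)) ∧
        (∀ i j, i ≠ j → f i * f j = 0) ∧ ∑ i, f i = p := by
  induction n with
  | zero =>
    intro p hp hlt
    have h1 := h.proj_re hp
    have := h.K_pos
    simp only [Nat.cast_zero] at hlt
    nlinarith [h1.1]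
  | succ n ih =>
    intro p hp hlt
    by_cases hp0 : p = 0
    · exact ⟨Empty, inferInstance, Empty.elim, fun i => i.elim, fun i => i.elim, by simp [hp0]⟩
    by_cases hmin : IsMinProj p
    · exact ⟨Unit, inferInstance, fun _ => p, fun _ => hmin, fun i j hij => absurd rfl hij,
        by simp⟩
    obtain ⟨e, he, hpe, he0, hep⟩ : ∃ e, IsStarProjection e ∧ p * e = e ∧ e ≠ 0 ∧ e ≠ p := by
      by_contra hcon
      push Not at hcon
      refine hmin ⟨hp, hp0, fun e he hpe => ?_⟩
      by_cases he0 : e = 0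
      · exact Or.inl he0
      · exact Or.inr (hcon e he hpe he0)
    have hep' : e * p = e := by
      have := congrArg star hpe
      rwa [star_mul, hp.isSelfAdjoint.star_eq, he.isSelfAdjoint.star_eq] at this
    have hd : IsStarProjection (p - e) := by
      refine ⟨?_, hp.isSelfAdjoint.sub he.isSelfAdjoint⟩
      change (p - e) * (p - e) = p - e
      rw [mul_sub, sub_mul, sub_mul, hp.isIdempotentElem.eq, he.isIdempotentElem.eq, hpe, hep']
      simp
    have h1 := h.proj_lower he he0
    have h2 := h.proj_lower hd (sub_ne_zero.mpr (Ne.symm hep))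
    have h3 : (τ (p - e)).re = (τ p).re - (τ e).re := by simp
    push_cast at hlt
    obtain ⟨ι, _, f, hf1, hf2, hf3⟩ := ih e he (by rw [h3] at h2; nlinarith)
    obtain ⟨κ, _, g, hg1, hg2, hg3⟩ := ih (p - e) hd (by rw [h3]; nlinarith)
    classical
    have hef : ∀ i, f i * e = f i := fun i => by
      rw [← hf3, Finset.mul_sum, Finset.sum_eq_single i]
      · exact (hf1 i).1.isIdempotentElem.eq
      · exact fun j _ hj => hf2 i j hj.symm
      · simp
    have hef' : ∀ i, e * f i = f i := fun i => by
      rw [← hf3, Finset.sum_mul, Finset.sum_eq_single i]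
      · exact (hf1 i).1.isIdempotentElem.eq
      · exact fun j _ hj => hf2 j i hj
      · simp
    have heg : ∀ i, g i * (p - e) = g i := fun i => by
      rw [← hg3, Finset.mul_sum, Finset.sum_eq_single i]
      · exact (hg1 i).1.isIdempotentElem.eq
      · exact fun j _ hj => hg2 i j hj.symm
      · simp
    have heg' : ∀ i, (p - e) * g i = g i := fun i => by
      rw [← hg3, Finset.sum_mul, Finset.sum_eq_single i]
      · exact (hg1 i).1.isIdempotentElem.eq
      · exact fun j _ hj => hg2 j i hj
      · simp
    refine ⟨ι ⊕ κ, inferInstance, Sum.elim f g, ?_, ?_, ?_⟩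
    · rintro (i | i)
      · exact hf1 i
      · exact hg1 i
    · rintro (i | i) (j | j) hij
      · exact hf2 i j (fun h => hij (by rw [h]))
      · change f i * g j = 0
        rw [← hef i, ← heg' j, mul_assoc, ← mul_assoc e, mul_sub, hep', he.isIdempotentElem.eq]
        simp
      · change g i * f j = 0
        rw [← heg i, ← hef' j, mul_assoc, ← mul_assoc (p - e), sub_mul, hpe,
          he.isIdempotentElem.eq]
        simp
      · exact hg2 i j (fun h => hij (by rw [h]))
    · simp [Fintype.sum_sum_type, hf3, hg3]

end IsBoundingTrace

end Structure

/-! ### Orthonormal bases of unitaries -/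

/-- An equivalence relation all of whose classes have `k` elements is the disjoint union of the
graphs of `k` permutations (cyclic shifts within the classes). -/
lemma exists_perms {ι : Type*} [Fintype ι] [DecidableEq ι] (S : Setoid ι) (k : ℕ) (hk : 0 < k)
    (hS : ∀ i, Nat.card {j // S.r j i} = k) :
    ∃ σ : Fin k → Equiv.Perm ι, (∀ r i, S.r (σ r i) i) ∧
      (∀ i r r', σ r i = σ r' i → r = r') ∧ ∀ i j, S.r j i → ∃ r, σ r i = j := by
  classical
  have : NeZero k := ⟨hk.ne'⟩
  have hfib : ∀ c : Quotient S, Nonempty ({i // Quotient.mk S i = c} ≃ Fin k) := by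
    intro c
    induction c using Quotient.inductionOn with
    | h i =>
      have e1 : {j // Quotient.mk S j = Quotient.mk S i} ≃ {j // S.r j i} :=
        Equiv.subtypeEquivRight fun j => Quotient.eq
      have h1 : Nat.card {j // Quotient.mk S j = Quotient.mk S i} = k := by
        rw [Nat.card_congr e1, hS]
      exact ⟨Finite.equivFinOfCardEq h1⟩
  let g := fun c => (hfib c).some
  let e : ι ≃ Quotient S × Fin k :=
    (Equiv.sigmaFiberEquiv (Quotient.mk S)).symm.trans
      ((Equiv.sigmaCongrRight fun c => (g c)).trans (Equiv.sigmaEquivProd _ _))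
  have he : ∀ i, (e i).1 = Quotient.mk S i := fun i => rfl
  refine ⟨fun r => (e.trans ((Equiv.refl _).prodCongr (Equiv.addRight r))).trans e.symm,
    ?_, ?_, ?_⟩
  · intro r i
    apply Quotient.exact (s := S)
    rw [← he, ← he]
    simp
  · intro i r r' h
    simpa [Prod.ext_iff] using h
  · intro i j hij
    refine ⟨(e j).2 - (e i).2, ?_⟩
    have h1 : (e i).1 = (e j).1 := by
      rw [he, he]
      exact Quotient.sound (s := S) (S.symm' hij)
    simp only [Equiv.trans_apply, Equiv.symm_apply_eq]
    ext1
    · simpa using h1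
    · simp

section Basis

variable {C : Type*} [CStarAlgebra C] {τ : C →ₗ[ℂ] ℂ} {K : ℝ}

lemma IsMinProj.map {p : C} (hp : IsMinProj p) (α : C ≃⋆ₐ[ℂ] C) : IsMinProj (α p) := by
  refine ⟨⟨?_, ?_⟩, ?_, ?_⟩
  · change α p * α p = α p
    rw [← map_mul, hp.1.isIdempotentElem.eq]
  · change star (α p) = α p
    rw [← map_star, hp.1.isSelfAdjoint.star_eq]
  · intro h0
    exact hp.2.1 ((EquivLike.injective α) (by rw [h0, map_zero]))
  · intro e he hpe
    have h1 : IsStarProjection (α.symm e) := by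
      refine ⟨?_, ?_⟩
      · change α.symm e * α.symm e = α.symm e
        rw [← map_mul, he.isIdempotentElem.eq]
      · change star (α.symm e) = α.symm e
        rw [← map_star, he.isSelfAdjoint.star_eq]
    have h2 : p * α.symm e = α.symm e := by
      apply EquivLike.injective α
      rw [map_mul, α.apply_symm_apply, hpe]
    rcases hp.2.2 _ h1 h2 with h3 | h3
    · left
      rw [← α.apply_symm_apply e, h3, map_zero]
    · right
      rw [← α.apply_symm_apply e, h3]

/-- A sum of mutually orthogonal projections is a projection. -/
lemma isStarProjection_sum {ι : Type*} (s : Finset ι) (f : ι → C)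
    (hf : ∀ i ∈ s, IsStarProjection (f i)) (ho : ∀ i j, i ≠ j → f i * f j = 0) :
    IsStarProjection (∑ i ∈ s, f i) := by
  classical
  refine ⟨?_, ?_⟩
  · change (∑ i ∈ s, f i) * (∑ i ∈ s, f i) = ∑ i ∈ s, f i
    rw [Finset.sum_mul]
    refine Finset.sum_congr rfl fun i hi => ?_
    rw [Finset.mul_sum, Finset.sum_eq_single_of_mem i hi]
    · exact (hf i hi).isIdempotentElem.eq
    · exact fun j _ hj => ho i j hj.symm
  · change star (∑ i ∈ s, f i) = ∑ i ∈ s, f i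
    rw [star_sum]
    exact Finset.sum_congr rfl fun i hi => (hf i hi).isSelfAdjoint.star_eq

/-- Murray–von Neumann equivalence of projections. -/
def MvN (p q : C) : Prop := ∃ v : C, v * star v = p ∧ star v * v = q

lemma MvN.symm {p q : C} (h : MvN p q) : MvN q p := by
  obtain ⟨v, h1, h2⟩ := h
  exact ⟨star v, by simpa using h2, by simpa using h1⟩

/-- If `v* v` is idempotent then `v` is a partial isometry. -/
lemma partial_isometry {v q : C} (hv : star v * v = q) (hq : q * q = q) : v * q = v := by
  have hqs : star q = q := by rw [← hv]; simp
  have h1 : star (v * q - v) * (v * q - v) = 0 := by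
    rw [star_sub, star_mul, hqs, sub_mul, mul_sub, mul_sub]
    have a1 : q * star v * (v * q) = q := by
      rw [mul_assoc, ← mul_assoc (star v), hv, hq, hq]
    have a2 : q * star v * v = q := by rw [mul_assoc, hv, hq]
    have a3 : star v * (v * q) = q := by rw [← mul_assoc, hv, hq]
    rw [a1, a2, a3, hv]; simp
  exact sub_eq_zero.mp (CStarRing.star_mul_self_eq_zero_iff _ |>.mp h1)

lemma partial_isometry' {v p : C} (hv : v * star v = p) (hp : p * p = p) : p * v = v := by
  have h1 : star p = p := by rw [← hv]; simp
  have := partial_isometry (v := star v) (q := p) (by simpa using hv) hp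
  have h2 := congrArg star this
  rwa [star_mul, star_star, h1] at h2

lemma MvN.trans {p q r : C} (h1 : MvN p q) (h2 : MvN q r) (hq : q * q = q) : MvN p r := by
  obtain ⟨v, hv1, hv2⟩ := h1
  obtain ⟨w, hw1, hw2⟩ := h2
  refine ⟨v * w, ?_, ?_⟩
  · rw [star_mul, mul_assoc, ← mul_assoc w, hw1, ← mul_assoc, partial_isometry hv2 hq, hv1]
  · rw [star_mul, mul_assoc, ← mul_assoc (star v), hv2, partial_isometry' hw1 hq, hw2]

lemma MvN.map {p q : C} (h : MvN p q) (α : C ≃⋆ₐ[ℂ] C) : MvN (α p) (α q) := by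
  obtain ⟨v, h1, h2⟩ := h
  exact ⟨α v, by rw [← map_star, ← map_mul, h1], by rw [← map_star, ← map_mul, h2]⟩

lemma IsBoundingTrace.mvN_of_ne_zero (h : IsBoundingTrace τ K) {p q x : C} (hp : IsMinProj p)
    (hq : IsMinProj q) (hx : p * x * q ≠ 0) : MvN p q :=
  h.exists_partial_isometry hp hq hx
    (by simp only [← mul_assoc, hp.1.isIdempotentElem.eq])
    (by rw [mul_assoc, hq.1.isIdempotentElem.eq])

lemma IsBoundingTrace.trace_mvN (h : IsBoundingTrace τ K) {p q : C} (hpq : MvN p q) :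
    τ p = τ q := by
  obtain ⟨v, h1, h2⟩ := hpq
  rw [← h1, ← h2, h.comm]

/-- A C⋆-algebra with a bounding trace, on whose minimal projections the trace preserving
automorphisms act transitively up to equivalence, has an orthonormal basis of unitaries. With
`p i` minimal projections summing to `1`, the basis consists of generalized Weyl unitaries
`∑ i, χ (i s) v r i`, where `χ` is a primitive character of `ZMod N` and `v r i` is a partial
isometry from `p i` to `p (σ r i)`, for permutations `σ r` decomposing the equivalence relation. -/
theorem exists_unitary_basis (h : IsBoundingTrace τ K)
    (H : ∀ p q : C, IsMinProj p → IsMinProj q →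
      ∃ α : C ≃⋆ₐ[ℂ] C, (∀ x, τ (α x) = τ x) ∧ p * α q ≠ 0) :
    ∃ (n : ℕ) (w : Fin n → C), (∀ i, w i ∈ unitary C) ∧
      (∀ i j, τ (star (w i) * w j) = if i = j then 1 else 0) ∧
      ∀ z, z = ∑ i, τ (z * w i) • star (w i) := by
  classical
  obtain ⟨n0, hn0⟩ := exists_nat_gt (K * (τ 1).re)
  obtain ⟨ι, _, p, hpm, hpo, hp1⟩ := h.exists_decomposition n0 1 (.one C) hn0
  have hpi : ∀ i, p i * p i = p i := fun i => (hpm i).1.isIdempotentElem.eq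
  have hps : ∀ i, star (p i) = p i := fun i => (hpm i).1.isSelfAdjoint.star_eq
  have hnt := h.nontrivial
  have hne : Nonempty ι := by
    by_contra hcon
    rw [not_nonempty_iff] at hcon
    simp at hp1
  have hmv : ∀ q r : C, IsMinProj q → IsMinProj r → ∃ α : C ≃⋆ₐ[ℂ] C, (∀ x, τ (α x) = τ x) ∧
      MvN q (α r) := by
    intro q r hq hr
    obtain ⟨α, hα, hne⟩ := H q r hq hr
    refine ⟨α, hα, h.mvN_of_ne_zero (x := 1) hq (hr.map α) (by simpa using hne)⟩
  -- all the `p i` have the same trace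
  set N := Fintype.card ι with hN
  have hN0 : N ≠ 0 := Fintype.card_ne_zero
  have hNC : (N : ℂ) ≠ 0 := Nat.cast_ne_zero.mpr hN0
  have : NeZero N := ⟨hN0⟩
  have htr : ∀ i, τ (p i) = (N : ℂ)⁻¹ := by
    intro i
    have h1 : ∀ j, τ (p j) = τ (p i) := by
      intro j
      obtain ⟨α, hα, hm⟩ := hmv (p j) (p i) (hpm j) (hpm i)
      rw [h.trace_mvN hm, hα]
    have h2 : ∑ j, τ (p j) = 1 := by rw [← map_sum, hp1, h.map_one]
    simp only [h1, Finset.sum_const, Finset.card_univ, nsmul_eq_mul] at h2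
    exact eq_inv_of_mul_eq_one_right h2
  -- Murray–von Neumann classes of the `p i`; they all have the same cardinality, since a trace
  -- preserving `α` moves the sum of one class under the sum of any other
  let S : Setoid ι :=
    { r := fun i j => MvN (p i) (p j)
      iseqv := ⟨fun i => ⟨p i, by rw [hps, hpi], by rw [hps, hpi]⟩, fun h => h.symm,
        fun {_ j _} h1 h2 => h1.trans h2 (hpi j)⟩ }
  have hcard : ∀ i i', Nat.card {j // S.r j i'} ≤ Nat.card {j // S.r j i} := by
    intro i i'
    obtain ⟨α, hα, hm⟩ := hmv (p i) (p i') (hpm i) (hpm i')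
    let s : ι → Finset ι := fun i => Finset.univ.filter fun j => S.r j i
    have hs : ∀ i, Nat.card {j // S.r j i} = (s i).card := by
      intro i
      rw [Nat.card_eq_fintype_card, Fintype.card_subtype]
    let z : ι → C := fun i => ∑ j ∈ s i, p j
    have hz : ∀ i, IsStarProjection (z i) := fun i =>
      isStarProjection_sum _ _ (fun j _ => (hpm j).1) hpo
    have hτz : ∀ i, τ (z i) = (s i).card * (N : ℂ)⁻¹ := by
      intro i
      simp [z, htr]
    -- a minimal projection equivalent to `p i` lies under `z i`
    have habs : ∀ q, IsMinProj q → MvN q (p i) → q * z i = q := by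
      intro q hq hqi
      have h1 : ∀ j, j ∉ s i → q * p j = 0 := by
        intro j hj
        by_contra hcon
        apply hj
        have h2 : MvN q (p j) := h.mvN_of_ne_zero (x := 1) hq (hpm j) (by simpa using hcon)
        simp only [s, Finset.mem_filter, Finset.mem_univ, true_and]
        exact h2.symm.trans hqi hq.1.isIdempotentElem.eq
      conv_rhs => rw [← mul_one q, ← hp1, Finset.mul_sum]
      rw [Finset.mul_sum]
      exact Finset.sum_subset (Finset.subset_univ _) fun j _ hj => h1 j hj
    have hle : α (z i') * z i = α (z i') := by
      simp only [z, map_sum, Finset.sum_mul]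
      refine Finset.sum_congr rfl fun j hj => ?_
      apply habs _ ((hpm j).map α)
      simp only [s, Finset.mem_filter, Finset.mem_univ, true_and] at hj
      have h1 : MvN (α (p j)) (α (p i')) := MvN.map hj α
      exact h1.trans hm.symm ((hpm i').map α).1.isIdempotentElem.eq
    have hαz : IsStarProjection (α (z i')) := by
      refine ⟨?_, ?_⟩
      · change α (z i') * α (z i') = α (z i')
        rw [← map_mul, (hz i').isIdempotentElem.eq]
      · change star (α (z i')) = α (z i')
        rw [← map_star, (hz i').isSelfAdjoint.star_eq]
    have hle' : z i * α (z i') = α (z i') := by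
      have := congrArg star hle
      rwa [star_mul, hαz.isSelfAdjoint.star_eq, (hz i).isSelfAdjoint.star_eq] at this
    have hd : IsStarProjection (z i - α (z i')) := by
      refine ⟨?_, (hz i).isSelfAdjoint.sub hαz.isSelfAdjoint⟩
      change (z i - α (z i')) * (z i - α (z i')) = z i - α (z i')
      rw [mul_sub, sub_mul, sub_mul, (hz i).isIdempotentElem.eq, hαz.isIdempotentElem.eq, hle,
        hle']
      simp
    have h3 := (h.proj_re hd).1
    rw [map_sub, hα, hτz, hτz, ← sub_mul] at h3
    have h4 : (((s i).card : ℂ) - (s i').card) * (N : ℂ)⁻¹ =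
        (((((s i).card : ℝ) - (s i').card) * (N : ℝ)⁻¹ : ℝ) : ℂ) := by push_cast; rfl
    rw [h4, Complex.ofReal_re] at h3
    have hNpos : (0 : ℝ) < (N : ℝ)⁻¹ := by positivity
    have h5 : (0 : ℝ) ≤ ((s i).card : ℝ) - (s i').card := nonneg_of_mul_nonneg_left h3 hNpos
    rw [hs, hs]
    exact_mod_cast sub_nonneg.mp h5
  obtain ⟨i0⟩ := hne
  obtain ⟨k, hk, hkS⟩ : ∃ k, 0 < k ∧ ∀ i, Nat.card {j // S.r j i} = k := by
    have : Nonempty {j // S.r j i0} := ⟨⟨i0, S.refl' i0⟩⟩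
    exact ⟨_, Nat.card_pos, fun i => le_antisymm (hcard i0 i) (hcard i i0)⟩
  obtain ⟨σ, hσ1, hσ2, hσ3⟩ := exists_perms S k hk hkS
  choose a ha1 ha2 using hσ1
  have hpa : ∀ r i, p (σ r i) * a r i = a r i := fun r i => partial_isometry' (ha1 r i) (hpi _)
  have hap : ∀ r i, a r i * p i = a r i := fun r i => partial_isometry (ha2 r i) (hpi _)
  have hsap : ∀ r i, star (a r i) * p (σ r i) = star (a r i) := fun r i => by
    have := congrArg star (hpa r i)
    rwa [star_mul, hps] at this
  have hpsa : ∀ r i, p i * star (a r i) = star (a r i) := fun r i => by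
    have := congrArg star (hap r i)
    rwa [star_mul, hps] at this
  -- the character table of `ZMod N`, transported to `ι`, makes the coefficients unimodular with
  -- orthogonal rows and columns
  let en : ι ≃ ZMod N := Fintype.equivOfCardEq (by rw [ZMod.card])
  let χ : ZMod N → ι → ℂ := fun s i => ZMod.stdAddChar (en i * s)
  have hχstar : ∀ s i, star (χ s i) = ZMod.stdAddChar (-(en i * s)) := fun s i => by
    rw [AddChar.map_neg_eq_conj]; rfl
  have hχ1 : ∀ s s', ∑ i, star (χ s i) * χ s' i = if s = s' then (N : ℂ) else 0 := by
    intro s s'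
    have h1 : ∀ i, star (χ s i) * χ s' i = ZMod.stdAddChar (en i * (s' - s)) := fun i => by
      rw [hχstar, ← AddChar.map_add_eq_mul]
      congr 1; ring
    simp only [h1]
    rw [Equiv.sum_comp en (fun x => (ZMod.stdAddChar (x * (s' - s)) : ℂ)),
      AddChar.sum_mulShift _ (ZMod.isPrimitive_stdAddChar N), ZMod.card]
    by_cases hss : s = s'
    · simp [hss]
    · simp [hss, sub_eq_zero, Ne.symm hss]
  have hχ2 : ∀ i i', ∑ s, star (χ s i) * χ s i' = if i = i' then (N : ℂ) else 0 := by
    intro i i'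
    have h1 : ∀ s, star (χ s i) * χ s i' = ZMod.stdAddChar (s * (en i' - en i)) := fun s => by
      rw [hχstar, ← AddChar.map_add_eq_mul]
      congr 1; ring
    simp only [h1]
    rw [AddChar.sum_mulShift _ (ZMod.isPrimitive_stdAddChar N), ZMod.card]
    by_cases hss : i = i'
    · simp [hss]
    · have : en i' ≠ en i := fun h => hss (en.injective h).symm
      simp [hss, sub_eq_zero, this]
  have hχχ : ∀ s i, star (χ s i) * χ s i = 1 := fun s i => by
    rw [hχstar, ← AddChar.map_add_eq_mul]; simp
  let w : Fin k × ZMod N → C := fun q => ∑ i, χ q.2 i • a q.1 i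
  have hws : ∀ q, star (w q) = ∑ i, star (χ q.2 i) • star (a q.1 i) := fun q => by
    simp only [w, star_sum, star_smul]
  have haz : ∀ r i i', i ≠ i' → star (a r i) * a r i' = 0 := by
    intro r i i' hii
    rw [← hsap r i, ← hpa r i', mul_assoc, ← mul_assoc (p _),
      hpo _ _ (fun hh => hii ((σ r).injective hh)), zero_mul, mul_zero]
  have haz' : ∀ r i i', i ≠ i' → a r i * star (a r i') = 0 := by
    intro r i i' hii
    rw [← hap r i, ← hpsa r i', mul_assoc, ← mul_assoc (p _), hpo _ _ hii, zero_mul, mul_zero]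
  have hτa : ∀ r r' i i', τ (star (a r i) * a r' i') = if r = r' ∧ i = i' then (N : ℂ)⁻¹ else 0 := by
    intro r r' i i'
    by_cases hii : i = i'
    · subst hii
      by_cases hrr : r = r'
      · subst hrr
        simp [ha2, htr]
      · have : star (a r i) * a r' i = 0 := by
          rw [← hsap r i, ← hpa r' i, mul_assoc, ← mul_assoc (p _),
            hpo _ _ (fun hh => hrr (hσ2 i r r' hh)), zero_mul, mul_zero]
        simp [this, hrr]
    · rw [if_neg (fun hh => hii hh.2), ← hpsa r i, ← hap r' i', h.comm, ← mul_assoc,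
        mul_assoc (a r' i'), hpo i' i (Ne.symm hii), mul_zero, zero_mul, map_zero]
  have hon : ∀ q q', τ (star (w q) * w q') = if q = q' then 1 else 0 := by
    intro q q'
    have h1 : τ (star (w q) * w q') =
        ∑ i, ∑ i', star (χ q.2 i) * χ q'.2 i' * τ (star (a q.1 i) * a q'.1 i') := by
      rw [hws]
      simp only [w, Finset.sum_mul, Finset.mul_sum, map_sum, smul_mul_smul_comm, map_smul,
        smul_eq_mul]
      rw [Finset.sum_comm]
    rw [h1]
    simp only [hτa]
    by_cases hq : q.1 = q'.1
    · simp only [hq, true_and, mul_ite, mul_zero, Finset.sum_ite_eq, Finset.mem_univ, if_true]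
      rw [← Finset.sum_mul, hχ1]
      by_cases hq2 : q.2 = q'.2
      · rw [if_pos hq2, if_pos (Prod.ext hq hq2), mul_inv_cancel₀ hNC]
      · rw [if_neg hq2, if_neg (fun hh => hq2 (by rw [hh])), zero_mul]
    · rw [if_neg (fun hh => hq (by rw [hh]))]
      simp [hq]
  have hun : ∀ q, w q ∈ unitary C := by
    intro q
    rw [Unitary.mem_iff, hws]
    constructor
    · rw [← hp1, Finset.sum_mul]
      refine Finset.sum_congr rfl fun i _ => ?_
      simp only [w, Finset.mul_sum]
      rw [Finset.sum_eq_single i]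
      · rw [smul_mul_smul_comm, hχχ, one_smul, ha2]
      · intro j _ hj
        rw [smul_mul_smul_comm, haz _ _ _ hj.symm, smul_zero]
      · simp
    · rw [← hp1, ← Equiv.sum_comp (σ q.1) p]
      simp only [w, Finset.sum_mul]
      refine Finset.sum_congr rfl fun i _ => ?_
      rw [Finset.mul_sum, Finset.sum_eq_single i]
      · rw [smul_mul_smul_comm, mul_comm, hχχ, one_smul, ha1]
      · intro j _ hj
        rw [smul_mul_smul_comm, haz' _ _ _ hj.symm, smul_zero]
      · simp
  have hspan : ∀ z : C, z ∈ Submodule.span ℂ (Set.range w) := by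
    intro z
    have hz : z = ∑ i, ∑ j, p j * z * p i := by
      simp only [← Finset.sum_mul, ← Finset.mul_sum, hp1, one_mul, mul_one]
    rw [hz]
    refine Submodule.sum_mem _ fun i _ => Submodule.sum_mem _ fun j _ => ?_
    by_cases h0 : p j * z * p i = 0
    · rw [h0]; exact Submodule.zero_mem _
    obtain ⟨r, hr⟩ := hσ3 i j (h.mvN_of_ne_zero (hpm j) (hpm i) h0)
    obtain ⟨c, hc⟩ := h.corner (hpm i) (star (a r i) * z)
    have h1 : p j * z * p i = c • a r i := by
      calc p j * z * p i = a r i * (star (a r i) * z * p i) := by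
            rw [← hr, ← ha1]; simp only [mul_assoc]
        _ = a r i * (p i * (star (a r i) * z) * p i) := by
            rw [← mul_assoc (p i), hpsa]
        _ = c • a r i := by rw [hc, mul_smul_comm, hap]
    have h2 : a r i = (N : ℂ)⁻¹ • ∑ s, star (χ s i) • w (r, s) := by
      simp only [w, Finset.smul_sum, smul_smul]
      rw [Finset.sum_comm]
      simp only [← Finset.sum_smul, ← Finset.mul_sum, hχ2]
      simp [hNC]
    rw [h1, h2]
    refine Submodule.smul_mem _ _ (Submodule.smul_mem _ _ (Submodule.sum_mem _ fun s _ => ?_))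
    exact Submodule.smul_mem _ _ (Submodule.subset_span ⟨_, rfl⟩)
  have hexp : ∀ z, z = ∑ q, τ (z * w q) • star (w q) := by
    intro z
    obtain ⟨c, hc⟩ := (Submodule.mem_span_range_iff_exists_fun ℂ).mp (hspan (star z))
    have hz : z = ∑ q, star (c q) • star (w q) := by
      have := congrArg star hc
      rw [star_star, star_sum] at this
      simpa only [star_smul] using this.symm
    have h1 : ∀ q, τ (z * w q) = star (c q) := by
      intro q
      conv_lhs => rw [hz]
      simp only [Finset.sum_mul, smul_mul_assoc, map_sum, map_smul, hon, smul_eq_mul]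
      simp
    simp only [h1]
    exact hz
  let e := (Fintype.equivFin (Fin k × ZMod N)).symm
  refine ⟨Fintype.card (Fin k × ZMod N), fun i => w (e i), fun i => hun _, fun i j => ?_,
    fun z => ?_⟩
  · rw [hon]
    simp
  · rw [Equiv.sum_comp e (fun q => τ (z * w q) • star (w q))]
    exact hexp z

end Basis

/-! ### Conditional expectations of finite index -/

section Expectation

variable {M : Type*} [CStarAlgebra M] {B : StarSubalgebra ℂ M} {E : M →ₗ[ℂ] M}

namespace IsCondExp

lemma mul_left (hE : IsCondExp (B : Set M) E) {b : M} (hb : b ∈ B) (x : M) :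
    E (b * x) = b * E x := by
  simpa using hE.2.2.2 b hb 1 (one_mem B) x

lemma mul_right (hE : IsCondExp (B : Set M) E) {b : M} (hb : b ∈ B) (x : M) :
    E (x * b) = E x * b := by
  simpa using hE.2.2.2 1 (one_mem B) b hb x

lemma map_one (hE : IsCondExp (B : Set M) E) : E 1 = 1 := hE.2.1 1 (one_mem B)

lemma map_star (hE : IsCondExp (B : Set M) E) (x : M) : E (star x) = star (E x) := by
  have hpos : ∀ y, star (E (star y * y)) = E (star y * y) := fun y => by
    obtain ⟨w, hw⟩ := hE.2.2.1 y
    rw [hw]; simp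
  have hsa : ∀ y : M, star y = y → star (E y) = E y := by
    intro y hy
    have h1 : y = (4 : ℂ)⁻¹ • (star (y + 1) * (y + 1) - star (y - 1) * (y - 1)) := by
      rw [star_add, star_sub, hy, star_one]
      have : (y + 1) * (y + 1) - (y - 1) * (y - 1) = (4 : ℂ) • y := by
        rw [show (4 : ℂ) • y = y + y + y + y by
          rw [show (4 : ℂ) = 1 + 1 + 1 + 1 by norm_num]; simp only [add_smul, one_smul]]
        noncomm_ring
      rw [this, smul_smul]; norm_num
    rw [h1, map_smul, map_sub, star_smul, star_sub, hpos, hpos]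
    simp
  have h1 := realPart_add_I_smul_imaginaryPart x
  have hr : star (realPart x : M) = realPart x := (realPart x).2
  have hi : star (imaginaryPart x : M) = imaginaryPart x := (imaginaryPart x).2
  rw [← h1]
  simp only [star_add, star_smul, hr, hi, map_add, map_smul, hsa _ hr, hsa _ hi]

lemma expand_left (hE : IsCondExp (B : Set M) E) {n : ℕ} {l : Fin n → M} (hl : IsRightQB E l)
    (x : M) : x = ∑ i, l i * E (star (l i) * x) := by
  have h1 := congrArg star (hl (star x))
  rw [star_star, star_sum] at h1
  conv_lhs => rw [h1]
  refine Finset.sum_congr rfl fun i _ => ?_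
  rw [star_mul, star_star, ← hE.map_star, star_mul, star_star]

/-- A quasi-basis makes the `B`-valued form `(x, y) ↦ E(x y)` nondegenerate. -/
lemma ext_mul (hE : IsCondExp (B : Set M) E) {n : ℕ} {l : Fin n → M} (hl : IsRightQB E l)
    {y y' : M} (h : ∀ x, E (x * y) = E (x * y')) : y = y' := by
  rw [hE.expand_left hl y, hE.expand_left hl y']
  simp only [h]

/-- A norm form of the Cauchy–Schwarz inequality `E(y* x)* E(y* x) ≤ ‖E(y* y)‖ E(x* x)`, with the
constant `‖E(y* y)‖ + 1`, which is invertible. -/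
lemma cauchy_schwarz (hE : IsCondExp (B : Set M) E) (y : M) :
    ∃ K : ℝ, 0 ≤ K ∧ ∀ x, ‖E (star y * x)‖ ^ 2 ≤ K * ‖E (star x * x)‖ := by
  let _ : PartialOrder M := CStarAlgebra.spectralOrder M
  have _ : StarOrderedRing M := CStarAlgebra.spectralOrderedRing M
  have hmem := hE.1
  set R : ℝ := ‖E (star y * y)‖ + 1 with hR
  have hRpos : 0 < R := by positivity
  refine ⟨R, hRpos.le, fun x => ?_⟩
  set a := E (star y * x) with ha
  have hsa : E (star x * y) = star a := by
    rw [ha, ← hE.map_star, star_mul, star_star]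
  have haB : a ∈ B := hmem _
  have haB' : star a ∈ B := star_mem haB
  -- positivity of `E` on `x - R⁻¹ • y * a`
  obtain ⟨w, hw⟩ := hE.2.2.1 (x - ((R⁻¹ : ℝ) : ℂ) • (y * a))
  have hexp : E (star (x - ((R⁻¹ : ℝ) : ℂ) • (y * a)) * (x - ((R⁻¹ : ℝ) : ℂ) • (y * a))) =
      E (star x * x) - (2 * R⁻¹) • (star a * a) + (R⁻¹ * R⁻¹) • (star a * E (star y * y) * a) := by
    have h1 : E (star x * (y * a)) = star a * a := by
      rw [← mul_assoc, hE.mul_right haB, hsa]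
    have h2 : E (star a * star y * x) = star a * a := by
      rw [mul_assoc, hE.mul_left haB']
    have h3 : E (star a * star y * (y * a)) = star a * E (star y * y) * a := by
      have := hE.2.2.2 (star a) haB' a haB (star y * y)
      rw [← this]
      simp only [mul_assoc]
    simp only [star_sub, star_smul, star_mul, sub_mul, mul_sub, smul_mul_assoc, mul_smul_comm,
      map_sub, map_smul, h1, h2, h3]
    have h4 : star ((R⁻¹ : ℝ) : ℂ) = ((R⁻¹ : ℝ) : ℂ) := Complex.conj_ofReal _
    rw [h4]
    simp only [Complex.coe_smul, smul_sub, smul_smul, two_mul, add_smul]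
    abel
  have hnn : 0 ≤ E (star x * x) - (2 * R⁻¹) • (star a * a)
      + (R⁻¹ * R⁻¹) • (star a * E (star y * y) * a) := by
    rw [← hexp, hw]
    exact star_mul_self_nonneg w
  have hyy : IsSelfAdjoint (E (star y * y)) := by
    change star _ = _
    rw [← hE.map_star]; simp
  have hle : star a * E (star y * y) * a ≤ R • (star a * a) := by
    refine (CStarAlgebra.star_left_conjugate_le_norm_smul hyy).trans ?_
    exact smul_le_smul_of_nonneg_right (by linarith) (star_mul_self_nonneg a)
  have h5 : (R⁻¹ * R⁻¹) • (star a * E (star y * y) * a) ≤ R⁻¹ • (star a * a) := by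
    have := smul_le_smul_of_nonneg_left hle (a := R⁻¹ * R⁻¹) (by positivity)
    rwa [smul_smul, mul_assoc R⁻¹ R⁻¹ R, inv_mul_cancel₀ hRpos.ne', mul_one] at this
  have h6 : R⁻¹ • (star a * a) ≤ E (star x * x) := by
    have h7 := hnn.trans (add_le_add_right h5 _)
    rw [two_mul, add_smul] at h7
    have h8 : E (star x * x) - (R⁻¹ • (star a * a) + R⁻¹ • (star a * a)) + R⁻¹ • (star a * a)
        = E (star x * x) - R⁻¹ • (star a * a) := by abel
    rw [h8] at h7
    exact sub_nonneg.mp h7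
  have h9 := CStarAlgebra.norm_le_norm_of_nonneg_of_le
    (smul_nonneg (by positivity) (star_mul_self_nonneg a)) h6
  rw [norm_smul, CStarRing.norm_star_mul_self, Real.norm_of_nonneg (by positivity)] at h9
  rw [inv_mul_le_iff₀ hRpos] at h9
  rw [sq]
  exact h9

/-- The Pimsner–Popa inequality, in norm. -/
lemma pimsner_popa (hE : IsCondExp (B : Set M) E) {n : ℕ} {l : Fin n → M} (hl : IsRightQB E l) :
    ∃ K : ℝ, ∀ x, ‖x‖ ^ 2 ≤ K * ‖E (star x * x)‖ := by
  choose K hK0 hK using hE.cauchy_schwarz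
  refine ⟨(∑ i, ‖l i‖ * Real.sqrt (K (l i))) ^ 2, fun x => ?_⟩
  have h1 : ‖x‖ ≤ (∑ i, ‖l i‖ * Real.sqrt (K (l i))) * Real.sqrt ‖E (star x * x)‖ := by
    conv_lhs => rw [hE.expand_left hl x]
    refine (norm_sum_le _ _).trans ?_
    rw [Finset.sum_mul]
    refine Finset.sum_le_sum fun i _ => (norm_mul_le _ _).trans ?_
    rw [mul_assoc]
    refine mul_le_mul_of_nonneg_left ?_ (norm_nonneg _)
    rw [← Real.sqrt_mul (hK0 _)]
    exact Real.le_sqrt_of_sq_le (hK _ _)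
  calc ‖x‖ ^ 2 ≤ ((∑ i, ‖l i‖ * Real.sqrt (K (l i))) * Real.sqrt ‖E (star x * x)‖) ^ 2 :=
        pow_le_pow_left₀ (norm_nonneg _) h1 2
    _ = _ := by rw [mul_pow, Real.sq_sqrt (norm_nonneg _)]

lemma faithful (hE : IsCondExp (B : Set M) E) {n : ℕ} {l : Fin n → M} (hl : IsRightQB E l)
    {x : M} (hx : E (star x * x) = 0) : x = 0 := by
  obtain ⟨K, hK⟩ := hE.pimsner_popa hl
  have := hK x
  rw [hx] at this
  simpa using this

end IsCondExp

lemma cent_star {c : M} (hc : c ∈ cent (B : Set M)) : star c ∈ cent (B : Set M) := by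
  intro b hb
  have := congrArg star (hc (star b) (star_mem hb))
  simpa using this.symm

lemma cent_mul {c d : M} (hc : c ∈ cent (B : Set M)) (hd : d ∈ cent (B : Set M)) :
    c * d ∈ cent (B : Set M) := by
  intro b hb
  rw [mul_assoc, hd b hb, ← mul_assoc, hc b hb, mul_assoc]

lemma cent_sub {c d : M} (hc : c ∈ cent (B : Set M)) (hd : d ∈ cent (B : Set M)) :
    c - d ∈ cent (B : Set M) := by
  intro b hb
  rw [sub_mul, mul_sub, hc b hb, hd b hb]

lemma cent_add {c d : M} (hc : c ∈ cent (B : Set M)) (hd : d ∈ cent (B : Set M)) :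
    c + d ∈ cent (B : Set M) := by
  intro b hb
  rw [add_mul, mul_add, hc b hb, hd b hb]

lemma cent_smul {c : M} (a : ℂ) (hc : c ∈ cent (B : Set M)) : a • c ∈ cent (B : Set M) := by
  intro b hb
  rw [smul_mul_assoc, mul_smul_comm, hc b hb]

lemma cent_one : (1 : M) ∈ cent (B : Set M) := fun b _ => by simp

/-- The centre of a simple unital C⋆-algebra is trivial: for `z` central and `c` in its spectrum,
the closure of `(z - c) B` is a proper closed ideal. -/
lemma center_trivial [Nontrivial M] (hBc : IsClosed (B : Set M))
    (hB : IsSimpleCStar (B : Set M)) {z : M} (hz : z ∈ B) (hzc : z ∈ cent (B : Set M)) :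
    ∃ c : ℂ, z = c • (1 : M) := by
  have : CompleteSpace B := hBc.completeSpace_coe
  obtain ⟨c, hc⟩ := spectrum.nonempty (⟨z, hz⟩ : B)
  refine ⟨c, ?_⟩
  set y : M := z - c • 1 with hy
  have hyB : y ∈ B := sub_mem hz (B.smul_mem (one_mem B) c)
  have hyc : y ∈ cent (B : Set M) := cent_sub hzc (cent_smul c cent_one)
  let J : Set M := (fun b => y * b) '' (B : Set M)
  have hJB : closure J ⊆ B := by
    refine closure_minimal ?_ hBc
    rintro _ ⟨b, hb, rfl⟩
    exact mul_mem hyB hb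
  rcases hB (closure J) hJB isClosed_closure
    (subset_closure ⟨0, zero_mem B, by simp⟩)
    (by
      intro a ha b hb
      refine map_mem_closure₂ continuous_add ha hb ?_
      rintro _ ⟨a, ha, rfl⟩ _ ⟨b, hb, rfl⟩
      exact ⟨a + b, add_mem ha hb, by simp [mul_add]⟩)
    (by
      intro a ha b hb
      constructor
      · refine map_mem_closure (f := fun t => t * b) (by fun_prop) ha ?_
        rintro _ ⟨a, ha, rfl⟩
        exact ⟨a * b, mul_mem ha hb, by simp [mul_assoc]⟩
      · refine map_mem_closure (f := fun t => b * t) (by fun_prop) ha ?_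
        rintro _ ⟨a, ha, rfl⟩
        refine ⟨b * a, mul_mem hb ha, ?_⟩
        simp only [← mul_assoc, hyc b hb]) with h0 | h1
  · have : y ∈ closure J := subset_closure ⟨1, one_mem B, by simp⟩
    rw [h0] at this
    exact sub_eq_zero.mp this
  · exfalso
    have h2 : (1 : M) ∈ closure J := by rw [h1]; exact one_mem B
    obtain ⟨_, ⟨b, hb, rfl⟩, hd⟩ := Metric.mem_closure_iff.mp h2 1 one_pos
    rw [dist_eq_norm] at hd
    let yB : B := ⟨y, hyB⟩
    let bB : B := ⟨b, hb⟩
    have h3 : IsUnit (yB * bB) := by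
      have h4 : ‖(1 : B) - yB * bB‖ < 1 := hd
      have := (Units.oneSub _ h4).isUnit
      simpa using this
    have h5 : Commute yB bB := Subtype.ext (hyc b hb)
    have h6 : IsUnit yB := (h5.isUnit_mul_iff.mp h3).1
    rw [spectrum.mem_iff] at hc
    apply hc
    have h7 : algebraMap ℂ B c - ⟨z, hz⟩ = -yB := by
      apply Subtype.ext
      simp [yB, hy, Algebra.algebraMap_eq_smul_one]
    rw [h7]
    exact h6.neg

end Expectation

/-! ### The index and its perturbations -/

section Index

variable {M : Type*} [CStarAlgebra M] {B : StarSubalgebra ℂ M} {E : M →ₗ[ℂ] M}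
  {n : ℕ} {l : Fin n → M}

lemma scalar_inj [Nontrivial M] {a b : ℂ} (h : a • (1 : M) = b • 1) : a = b :=
  smul_left_injective ℂ (one_ne_zero (α := M)) h

lemma scalar_real [Nontrivial M] {c : ℂ} (h : star (c • (1 : M)) = c • 1) : c = (c.re : ℂ) := by
  rw [star_smul, star_one] at h
  exact (Complex.conj_eq_iff_re.mp (scalar_inj h)).symm

lemma scalar_nonneg [Nontrivial M] {c : ℂ} {y : M} (h : c • (1 : M) = star y * y) :
    0 ≤ c.re ∧ c = (c.re : ℂ) := by
  let _ : PartialOrder M := CStarAlgebra.spectralOrder M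
  have _ : StarOrderedRing M := CStarAlgebra.spectralOrderedRing M
  have hr : c = (c.re : ℂ) := scalar_real (M := M) (by rw [h]; simp)
  refine ⟨?_, hr⟩
  apply spectrum_star_mul_self_nonneg (b := y)
  rw [← h, hr, Complex.coe_smul, ← Algebra.algebraMap_eq_smul_one, spectrum.scalar_eq]
  simp

lemma IsCondExp.scalar_of_cent [Nontrivial M] (hE : IsCondExp (B : Set M) E)
    (hBc : IsClosed (B : Set M)) (hB : IsSimpleCStar (B : Set M)) {z : M}
    (hz : z ∈ cent (B : Set M)) : ∃ c : ℂ, E z = c • (1 : M) :=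
  center_trivial hBc hB (hE.1 z)
    (by intro b hb; rw [← hE.mul_right hb, ← hE.mul_left hb, hz b hb])

/-- For `z` in the centralizer, `∑ λᵢ z λᵢ*` is central in the ambient algebra. -/
lemma IsCondExp.sum_commute (hE : IsCondExp (B : Set M) E) (hl : IsRightQB E l) {z : M}
    (hz : z ∈ cent (B : Set M)) (a : M) :
    (∑ i, l i * z * star (l i)) * a = a * ∑ i, l i * z * star (l i) := by
  calc (∑ i, l i * z * star (l i)) * a
      = ∑ i, ∑ j, l i * E (star (l i) * a * l j) * (z * star (l j)) := by
        rw [Finset.sum_mul]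
        refine Finset.sum_congr rfl fun i _ => ?_
        rw [mul_assoc]
        conv_lhs => rw [hl (star (l i) * a), Finset.mul_sum]
        refine Finset.sum_congr rfl fun j _ => ?_
        rw [mul_assoc, ← mul_assoc z, hz _ (hE.1 _)]
        simp only [mul_assoc]
    _ = ∑ j, a * l j * (z * star (l j)) := by
        rw [Finset.sum_comm]
        refine Finset.sum_congr rfl fun j _ => ?_
        rw [← Finset.sum_mul]
        congr 1
        conv_rhs => rw [hE.expand_left hl (a * l j)]
        simp only [mul_assoc]
    _ = _ := by
        rw [Finset.mul_sum]
        simp only [mul_assoc]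

lemma IsCondExp.sum_scalar [Nontrivial M] (hE : IsCondExp (B : Set M) E) (hl : IsRightQB E l)
    (hM : IsSimpleCStar (Set.univ : Set M)) {z : M} (hz : z ∈ cent (B : Set M)) :
    ∃ c : ℂ, ∑ i, l i * z * star (l i) = c • (1 : M) := by
  refine center_trivial (B := ⊤) (by simp) (by simpa using hM) trivial ?_
  intro a _
  exact hE.sum_commute hl hz a

/-- Perturbing the minimal expectation by an invertible self-adjoint `k` of the centralizer: the
expectation `y ↦ c⁻¹ E(k y k)`, where `E(k²) = c`, has index `c · ∑ λᵢ k⁻² λᵢ*`. -/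
lemma IsCondExp.le_perturbed [Nontrivial M] (hE : IsCondExp (B : Set M) E) (hl : IsRightQB E l)
    {r₀ : ℝ}
    (hmin : ∀ E' : M →ₗ[ℂ] M, IsCondExp (B : Set M) E' → ∀ (m : ℕ) (μ : Fin m → M),
      IsRightQB E' μ → ∀ r : ℝ, (∑ i, μ i * star (μ i)) = (r : ℂ) • 1 → r₀ ≤ r)
    {k k' : M} (hk : k ∈ cent (B : Set M)) (hks : star k = k) (hk's : star k' = k')
    (h1 : k * k' = 1) (h2 : k' * k = 1) {c f : ℝ} (hc : E (k * k) = (c : ℂ) • 1)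
    (hf : ∑ i, l i * (k' * k') * star (l i) = (f : ℂ) • 1) : r₀ ≤ c * f := by
  have hk' : k' ∈ cent (B : Set M) := by
    intro b hb
    calc k' * b = k' * b * (k * k') := by rw [h1, mul_one]
      _ = k' * (b * k) * k' := by simp only [mul_assoc]
      _ = k' * (k * b) * k' := by rw [hk b hb]
      _ = k' * k * b * k' := by simp only [mul_assoc]
      _ = b * k' := by rw [h2, one_mul]
  have hc0 : 0 ≤ c := by
    obtain ⟨y, hy⟩ := hE.2.2.1 k
    rw [hks, hc] at hy
    simpa using (scalar_nonneg hy).1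
  have hcne : c ≠ 0 := by
    intro h0
    have : k = 0 := hE.faithful hl (by rw [hks, hc, h0]; simp)
    rw [this] at h1
    simp at h1
  have hcC : (c : ℂ) ≠ 0 := by exact_mod_cast hcne
  have hsq : ((Real.sqrt c : ℝ) : ℂ) * ((Real.sqrt c : ℝ) : ℂ) = c := by
    rw [← Complex.ofReal_mul, Real.mul_self_sqrt hc0]
  have hsq' : ((Real.sqrt c⁻¹ : ℝ) : ℂ) * ((Real.sqrt c⁻¹ : ℝ) : ℂ) = (c : ℂ)⁻¹ := by
    rw [← Complex.ofReal_mul, Real.mul_self_sqrt (by positivity), Complex.ofReal_inv]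
  have hconj : ∀ t : ℝ, star (t : ℂ) = t := fun t => Complex.conj_ofReal t
  let E' : M →ₗ[ℂ] M :=
    (c : ℂ)⁻¹ • (E ∘ₗ LinearMap.mulLeft ℂ k ∘ₗ LinearMap.mulRight ℂ k)
  have hE'a : ∀ y, E' y = (c : ℂ)⁻¹ • E (k * (y * k)) := fun y => rfl
  have hE' : IsCondExp (B : Set M) E' := by
    refine ⟨fun x => B.smul_mem (hE.1 _) _, ?_, ?_, ?_⟩
    · intro b hb
      rw [hE'a, ← mul_assoc, hk b hb, mul_assoc, hE.mul_left hb, hc, mul_smul_comm, smul_smul,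
        inv_mul_cancel₀ hcC, one_smul, mul_one]
    · intro x
      obtain ⟨y, hy⟩ := hE.2.2.1 (x * k)
      refine ⟨((Real.sqrt c⁻¹ : ℝ) : ℂ) • y, ?_⟩
      rw [star_smul, smul_mul_smul_comm, hconj, hsq', ← hy, hE'a, star_mul, hks]
      simp only [mul_assoc]
    · intro b₁ hb₁ b₂ hb₂ x
      have : k * (b₁ * x * b₂ * k) = b₁ * (k * (x * k)) * b₂ := by
        rw [mul_assoc (b₁ * x), ← hk b₂ hb₂]
        simp only [← mul_assoc]
        rw [hk b₁ hb₁]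
      rw [hE'a, hE'a, this, hE.2.2.2 b₁ hb₁ b₂ hb₂, mul_smul_comm, smul_mul_assoc]
  refine hmin E' hE' n (fun i => ((Real.sqrt c : ℝ) : ℂ) • (l i * k')) ?_ (c * f) ?_
  · intro x
    have : ∀ i, E' (x * (((Real.sqrt c : ℝ) : ℂ) • (l i * k'))) *
        star (((Real.sqrt c : ℝ) : ℂ) • (l i * k')) = k' * (E (k * x * l i) * star (l i)) := by
      intro i
      have h3 : k * (x * (l i * k') * k) = k * x * l i := by
        simp only [mul_assoc, h2, mul_one]
      rw [mul_smul_comm, map_smul, star_smul, smul_mul_smul_comm, hconj, hsq, hE'a, h3,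
        smul_mul_assoc, smul_smul, mul_inv_cancel₀ hcC, one_smul, star_mul, hk's, ← mul_assoc,
        ← mul_assoc, hk' _ (hE.1 _)]
    simp only [this]
    rw [← Finset.mul_sum, ← hl (k * x), ← mul_assoc, h2, one_mul]
  · have : ∀ i, (((Real.sqrt c : ℝ) : ℂ) • (l i * k')) *
        star (((Real.sqrt c : ℝ) : ℂ) • (l i * k')) = (c : ℂ) • (l i * (k' * k') * star (l i)) := by
      intro i
      rw [star_smul, smul_mul_smul_comm, hconj, hsq, star_mul, hk's]
      simp only [mul_assoc]
    simp only [this]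
    rw [← Finset.smul_sum, hf, smul_smul, Complex.ofReal_mul]

end Index

/-! ### The first-order condition for minimality -/

section Minimal

variable {M : Type*} [CStarAlgebra M] {B : StarSubalgebra ℂ M} {E : M →ₗ[ℂ] M}
  {n : ℕ} {l : Fin n → M}

/-- First-order condition for minimality at a self-adjoint `x` of the centralizer: the index of the
expectation perturbed by `1 + ε x` is minimal at `ε = 0`, and its derivative there is
`2 r₀ E(x) - 2 ∑ λᵢ x λᵢ*`. -/
lemma IsCondExp.minimal_selfAdjoint [Nontrivial M] (hE : IsCondExp (B : Set M) E)
    (hl : IsRightQB E l) (hBc : IsClosed (B : Set M)) (hB : IsSimpleCStar (B : Set M))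
    (hM : IsSimpleCStar (Set.univ : Set M)) {r₀ : ℝ}
    (hr₀ : (∑ i, l i * star (l i)) = (r₀ : ℂ) • 1)
    (hmin : ∀ E' : M →ₗ[ℂ] M, IsCondExp (B : Set M) E' → ∀ (m : ℕ) (μ : Fin m → M),
      IsRightQB E' μ → ∀ r : ℝ, (∑ i, μ i * star (μ i)) = (r : ℂ) • 1 → r₀ ≤ r)
    {x : M} (hx : x ∈ cent (B : Set M)) (hxs : star x = x) :
    ∑ i, l i * x * star (l i) = (r₀ : ℂ) • E x := by
  have realE : ∀ z ∈ cent (B : Set M), star z = z → ∃ c : ℝ, E z = (c : ℂ) • 1 := by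
    intro z hz hzs
    obtain ⟨c, hc⟩ := hE.scalar_of_cent hBc hB hz
    refine ⟨c.re, ?_⟩
    rw [← scalar_real (M := M) (c := c) (by rw [← hc, ← hE.map_star, hzs]), hc]
  have realF : ∀ z ∈ cent (B : Set M), star z = z →
      ∃ c : ℝ, ∑ i, l i * z * star (l i) = (c : ℂ) • 1 := by
    intro z hz hzs
    obtain ⟨c, hc⟩ := hE.sum_scalar hl hM hz
    refine ⟨c.re, ?_⟩
    rw [← scalar_real (M := M) (c := c) (by
      rw [← hc, star_sum]
      simp only [star_mul, star_star, hzs, mul_assoc]), hc]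
  obtain ⟨a, ha⟩ := realE x hx hxs
  obtain ⟨b, hb⟩ := realE (x * x) (cent_mul hx hx) (by rw [star_mul, hxs])
  obtain ⟨f, hf⟩ := realF x hx hxs
  obtain ⟨g, -, hg⟩ := exists_dual_vector ℂ (1 : M) (by simp)
  have hg1 : g 1 = 1 := by simpa using hg
  let L₀ : M →L[ℂ] ℂ := g ∘L (∑ i, ContinuousLinearMap.mulLeftRight ℂ M (l i) (star (l i)))
  have hL₀ : ∀ y, L₀ y = g (∑ i, l i * y * star (l i)) := by
    intro y
    simp [L₀]
  let L : M →L[ℝ] ℝ := Complex.reCLM ∘L (L₀.restrictScalars ℝ)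
  have hL : ∀ (y : M) (t : ℝ), ∑ i, l i * y * star (l i) = (t : ℂ) • 1 → L y = t := by
    intro y t h
    have : L y = (L₀ y).re := rfl
    rw [this, hL₀, h, map_smul, hg1]
    simp
  have hL1 : L 1 = r₀ := hL 1 r₀ (by simpa using hr₀)
  have hLx : L x = f := hL x f hf
  let v : ℝ → M := fun ε => Ring.inverse (1 + ε • x)
  have hv0 : v 0 = 1 := by simp [v]
  have hlin : HasDerivAt (fun ε : ℝ => 1 + ε • x) x 0 := by
    have := ((hasDerivAt_id (0 : ℝ)).smul_const x).const_add (1 : M)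
    simpa using this
  have hv : HasDerivAt v (-x) 0 := by
    have h1 := hasFDerivAt_ringInverse (𝕜 := ℝ) (1 : Mˣ)
    have h2 : ((1 : Mˣ) : M) = 1 + (0 : ℝ) • x := by simp
    rw [h2] at h1
    have h3 := h1.comp_hasDerivAt (0 : ℝ) hlin
    refine HasDerivAt.congr_deriv (f' := _) h3 ?_
    simp
  let G : ℝ → ℝ := fun ε => (1 + 2 * ε * a + ε * ε * b) * L (v ε * v ε)
  have hG : HasDerivAt G (2 * a * r₀ - 2 * f) 0 := by
    have h1 : HasDerivAt (fun ε => L (v ε * v ε)) (L (-x * v 0 + v 0 * -x)) 0 :=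
      L.hasFDerivAt.comp_hasDerivAt (0 : ℝ) (hv.mul hv)
    have h2 : HasDerivAt (fun ε : ℝ => 1 + 2 * ε * a + ε * ε * b) (2 * a) 0 := by
      exact (((((hasDerivAt_id (0 : ℝ)).const_mul 2).mul_const a).const_add 1).add
        (((hasDerivAt_id (0 : ℝ)).mul (hasDerivAt_id (0 : ℝ))).mul_const b)).congr_deriv (by simp)
    have h3 := h2.mul h1
    refine h3.congr_deriv ?_
    simp only [hv0, mul_one, one_mul, map_add, map_neg, hL1, hLx]
    ring
  have hGmin : IsLocalMin G 0 := by
    have hev : ∀ᶠ ε : ℝ in nhds 0, IsUnit (1 + ε • x) := by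
      have : Filter.Tendsto (fun ε : ℝ => 1 + ε • x) (nhds 0) (nhds 1) := by
        have := hlin.continuousAt.tendsto
        simpa using this
      exact this.eventually (Units.isOpen.mem_nhds isUnit_one)
    filter_upwards [hev] with ε hε
    have hG0 : G 0 = r₀ := by simp [G, hv0, hL1]
    rw [hG0]
    set k : M := 1 + ε • x with hkdef
    have hxe : ε • x = (ε : ℂ) • x := (Complex.coe_smul ε x).symm
    have hk : k ∈ cent (B : Set M) := by
      rw [hkdef, hxe]
      exact cent_add cent_one (cent_smul _ hx)
    have hks : star k = k := by
      rw [hkdef, star_add, star_one, star_smul, hxs, star_trivial]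
    have h1 : k * v ε = 1 := Ring.mul_inverse_cancel _ hε
    have h2 : v ε * k = 1 := Ring.inverse_mul_cancel _ hε
    have hvs : star (v ε) = v ε := by
      change star (Ring.inverse k) = Ring.inverse k
      rw [← Ring.inverse_star, hks]
    have hvc : v ε ∈ cent (B : Set M) := by
      intro b hb
      calc v ε * b = v ε * b * (k * v ε) := by rw [h1, mul_one]
        _ = v ε * (b * k) * v ε := by simp only [mul_assoc]
        _ = v ε * (k * b) * v ε := by rw [hk b hb]
        _ = v ε * k * b * v ε := by simp only [mul_assoc]
        _ = b * v ε := by rw [h2, one_mul]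
    obtain ⟨t, ht⟩ := realF (v ε * v ε) (cent_mul hvc hvc) (by rw [star_mul, hvs])
    have hc : E (k * k) = ((1 + 2 * ε * a + ε * ε * b : ℝ) : ℂ) • 1 := by
      have : k * k = 1 + (2 * ε : ℂ) • x + (ε * ε : ℂ) • (x * x) := by
        rw [hkdef, hxe, add_mul, mul_add, mul_add, smul_mul_smul_comm]
        simp only [mul_one, one_mul, two_mul, add_smul]
        abel
      rw [this, map_add, map_add, map_smul, map_smul, ha, hb, hE.map_one, smul_smul, smul_smul]
      push_cast
      simp only [add_smul, one_smul]
    have := hE.le_perturbed hl hmin hk hks hvs h1 h2 hc ht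
    simpa [G, hL _ t ht] using this
  have hz := hGmin.hasDerivAt_eq_zero hG
  have hfa : f = r₀ * a := by linarith
  rw [hf, ha, smul_smul, hfa, Complex.ofReal_mul]

/-- The characterization of minimality used throughout: `∑ λᵢ z λᵢ* = r₀ E(z)` on the
centralizer. -/
lemma IsCondExp.minimal_sum [Nontrivial M] (hE : IsCondExp (B : Set M) E)
    (hl : IsRightQB E l) (hBc : IsClosed (B : Set M)) (hB : IsSimpleCStar (B : Set M))
    (hM : IsSimpleCStar (Set.univ : Set M)) {r₀ : ℝ}
    (hr₀ : (∑ i, l i * star (l i)) = (r₀ : ℂ) • 1)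
    (hmin : ∀ E' : M →ₗ[ℂ] M, IsCondExp (B : Set M) E' → ∀ (m : ℕ) (μ : Fin m → M),
      IsRightQB E' μ → ∀ r : ℝ, (∑ i, μ i * star (μ i)) = (r : ℂ) • 1 → r₀ ≤ r)
    {z : M} (hz : z ∈ cent (B : Set M)) :
    ∑ i, l i * z * star (l i) = (r₀ : ℂ) • E z := by
  have key := fun {x : M} (hx : x ∈ cent (B : Set M)) (hxs : star x = x) =>
    hE.minimal_selfAdjoint hl hBc hB hM hr₀ hmin hx hxs
  have h1 := key (x := z + star z) (cent_add hz (cent_star hz)) (by simp [add_comm])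
  have h2 := key (x := Complex.I • (z - star z))
    (cent_smul _ (cent_sub hz (cent_star hz))) (by simp [star_smul, ← smul_neg])
  simp only [mul_smul_comm, smul_mul_assoc, mul_add, add_mul, mul_sub, sub_mul, map_add, map_sub,
    map_smul, Finset.sum_add_distrib, Finset.sum_sub_distrib, ← Finset.smul_sum, smul_add] at h1 h2
  rw [smul_comm] at h2
  have h3 := smul_right_injective M Complex.I_ne_zero h2
  rw [smul_sub] at h3
  have h4 : (2 : ℂ) • (∑ i, l i * z * star (l i)) = (2 : ℂ) • ((r₀ : ℂ) • E z) := by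
    rw [two_smul, two_smul]
    calc _ = (∑ i, l i * z * star (l i) + ∑ i, l i * star z * star (l i)) +
          (∑ i, l i * z * star (l i) - ∑ i, l i * star z * star (l i)) := by abel
      _ = _ := by rw [h1, h3]; abel
  exact smul_right_injective M two_ne_zero h4

lemma index_ne_zero [Nontrivial M] (hl : IsRightQB E l) {r₀ : ℝ}
    (hr₀ : (∑ i, l i * star (l i)) = (r₀ : ℂ) • 1) : r₀ ≠ 0 := by
  let _ : PartialOrder M := CStarAlgebra.spectralOrder M
  have _ : StarOrderedRing M := CStarAlgebra.spectralOrderedRing M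
  rintro rfl
  have h := (Finset.sum_eq_zero_iff_of_nonneg (fun i _ => mul_star_self_nonneg (l i))).mp
    (hr₀.trans (by simp))
  have h1 : ∀ i, l i = 0 := fun i => by
    have := h i (Finset.mem_univ _)
    rwa [CStarRing.mul_star_self_eq_zero_iff] at this
  have := hl 1
  simp [h1] at this

end Minimal

/-! ### Traciality, uniqueness and invariance of the minimal expectation -/

section Trace

variable {M : Type*} [CStarAlgebra M] {B : StarSubalgebra ℂ M} {E E' : M →ₗ[ℂ] M}
  {n : ℕ} {l : Fin n → M} {m : ℕ} {μ : Fin m → M}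

/-- The modular automorphism `θ` of `E` on the centralizer: `E(c x) = E(x θ(c))`. -/
lemma IsCondExp.exists_modular (hE : IsCondExp (B : Set M) E) (hl : IsRightQB E l) {c : M}
    (hc : c ∈ cent (B : Set M)) : ∃ t ∈ cent (B : Set M), ∀ x, E (c * x) = E (x * t) := by
  have key : ∀ x, E (c * x) = E (x * ∑ i, l i * E (c * star (l i))) := by
    intro x
    conv_lhs => rw [hl x]
    rw [Finset.mul_sum, Finset.mul_sum, map_sum, map_sum]
    refine Finset.sum_congr rfl fun i _ => ?_
    rw [← mul_assoc, hc _ (hE.1 _), mul_assoc, hE.mul_left (hE.1 _), ← mul_assoc x,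
      hE.mul_right (hE.1 _)]
  refine ⟨_, ?_, key⟩
  intro b hb
  refine hE.ext_mul hl fun x => ?_
  rw [← mul_assoc, ← mul_assoc, hE.mul_right hb, ← key, ← key, ← mul_assoc, hE.mul_right hb]

/-- An expectation satisfying `∑ λᵢ z λᵢ* = r₀ E(z)` on the centralizer is tracial there: the
modular automorphism `θ` is an involution, and `d = c - θ(c)` satisfies `E(d d*) = -E(d* d)`. -/
lemma IsCondExp.tracial (hE : IsCondExp (B : Set M) E) (hl : IsRightQB E l) {r₀ : ℝ} (hr : r₀ ≠ 0)
    (hF : ∀ z ∈ cent (B : Set M), ∑ i, l i * z * star (l i) = (r₀ : ℂ) • E z) {c : M}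
    (hc : c ∈ cent (B : Set M)) (x : M) : E (c * x) = E (x * c) := by
  obtain ⟨t, ht, hct⟩ := hE.exists_modular hl hc
  obtain ⟨s, hs, hts⟩ := hE.exists_modular hl ht
  have hrC : (r₀ : ℂ) ≠ 0 := by exact_mod_cast hr
  have h1 : ∀ z ∈ cent (B : Set M), E (t * z) = E (z * c) := by
    intro z hz
    refine smul_right_injective M hrC ?_
    change (r₀ : ℂ) • E (t * z) = (r₀ : ℂ) • E (z * c)
    rw [← hF _ (cent_mul ht hz), ← hF _ (cent_mul hz hc)]
    calc ∑ i, l i * (t * z) * star (l i)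
        = ∑ i, ∑ j, l j * z * (E (c * star (l j) * l i) * star (l i)) := by
          refine Finset.sum_congr rfl fun i _ => ?_
          rw [← mul_assoc]
          conv_lhs => rw [hE.expand_left hl (l i * t), Finset.sum_mul, Finset.sum_mul]
          refine Finset.sum_congr rfl fun j _ => ?_
          rw [← mul_assoc (star (l j)), ← hct, ← mul_assoc c, mul_assoc (l j), ← hz _ (hE.1 _)]
          simp only [mul_assoc]
      _ = ∑ j, l j * (z * c) * star (l j) := by
          rw [Finset.sum_comm]
          refine Finset.sum_congr rfl fun j _ => ?_
          rw [← Finset.mul_sum, ← hl (c * star (l j))]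
          simp only [mul_assoc]
  have hcs : c = s := by
    have h2 : E (star (c - s) * (c - s)) = 0 := by
      rw [mul_sub, map_sub, ← h1 _ (cent_star (cent_sub hc hs)), ← hts, sub_self]
    exact sub_eq_zero.mp (hE.faithful hl h2)
  subst hcs
  have hd : E (star (c - t) * (c - t)) = - E (star (star (c - t)) * star (c - t)) := by
    rw [star_star, sub_mul, map_sub, hct, hts, mul_sub, map_sub, neg_sub]
  have hd0 : E (star (c - t) * (c - t)) = 0 := by
    let _ : PartialOrder M := CStarAlgebra.spectralOrder M
    have _ : StarOrderedRing M := CStarAlgebra.spectralOrderedRing M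
    obtain ⟨y, hy⟩ := hE.2.2.1 (c - t)
    obtain ⟨w, hw⟩ := hE.2.2.1 (star (c - t))
    refine le_antisymm ?_ ?_
    · rw [hd, hw]
      exact neg_nonpos.mpr (star_mul_self_nonneg w)
    · rw [hy]
      exact star_mul_self_nonneg y
  have : c = t := sub_eq_zero.mp (hE.faithful hl hd0)
  rw [hct, ← this]

/-- Uniqueness of the minimal expectation, in the form needed: an expectation `E'` that is tracial
on the centralizer and has the same index `r₀` equals `E`. The density `g` with `E = E'( · g)`
satisfies `∑ λᵢ g λᵢ* = r₀`, so `E(g) = 1` and `E'((1 - g)²) = 0`. -/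
lemma IsCondExp.unique_tracial (hE : IsCondExp (B : Set M) E) (hl : IsRightQB E l)
    (hE' : IsCondExp (B : Set M) E') (hμ : IsRightQB E' μ) {r₀ : ℝ} (hr : r₀ ≠ 0)
    (hF : ∀ z ∈ cent (B : Set M), ∑ i, l i * z * star (l i) = (r₀ : ℂ) • E z)
    (htr : ∀ c ∈ cent (B : Set M), ∀ x, E' (c * x) = E' (x * c))
    (hμr : ∑ j, μ j * star (μ j) = (r₀ : ℂ) • 1) (x : M) : E' x = E x := by
  have hrC : (r₀ : ℂ) ≠ 0 := by exact_mod_cast hr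
  obtain ⟨g, hgd⟩ : ∃ g, ∀ x, E' (x * g) = E x := by
    refine ⟨∑ j, μ j * E (star (μ j)), fun x => ?_⟩
    conv_rhs => rw [hμ x]
    rw [Finset.mul_sum, map_sum, map_sum]
    refine Finset.sum_congr rfl fun i _ => ?_
    rw [← mul_assoc, hE'.mul_right (hE.1 _), hE.mul_left (hE'.1 _)]
  have hgc : g ∈ cent (B : Set M) := by
    intro b hb
    refine hE'.ext_mul hμ fun x => ?_
    rw [← mul_assoc, ← mul_assoc, hE'.mul_right hb, hgd, hgd, hE.mul_right hb]
  have hgs : star g = g := by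
    refine hE'.ext_mul hμ fun x => ?_
    have : x * star g = star (g * star x) := by simp
    rw [this, hE'.map_star, htr g hgc, hgd, hgd, hE.map_star, star_star]
  have hEg : E g = 1 := by
    refine smul_right_injective M hrC ?_
    change (r₀ : ℂ) • E g = (r₀ : ℂ) • 1
    rw [← hF g hgc, ← hμr]
    calc ∑ i, l i * g * star (l i)
        = ∑ i, ∑ j, μ j * (E (star (μ j) * l i) * star (l i)) := by
          refine Finset.sum_congr rfl fun i _ => ?_
          conv_lhs => rw [hE'.expand_left hμ (l i * g), Finset.sum_mul]
          refine Finset.sum_congr rfl fun j _ => ?_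
          rw [← mul_assoc (star (μ j)), hgd, mul_assoc]
      _ = ∑ j, μ j * star (μ j) := by
          rw [Finset.sum_comm]
          refine Finset.sum_congr rfl fun j _ => ?_
          rw [← Finset.mul_sum, ← hl (star (μ j))]
  have h0 : E' (star (1 - g) * (1 - g)) = 0 := by
    have hg' : E' g = 1 := by simpa [hE.map_one] using hgd 1
    rw [star_sub, star_one, hgs, mul_sub, map_sub, hgd, map_sub, hE.map_one, hEg, mul_one, map_sub,
      hE'.map_one, hg']
    simp
  have hg1 : (1 : M) = g := sub_eq_zero.mp (hE'.faithful hμ h0)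
  rw [← hgd x, ← hg1, mul_one]

lemma normalizer_conj {u : M} (hu : u ∈ normalizer (B : Set M)) {b : M} (hb : b ∈ B) :
    u * b * star u ∈ B := by
  have : u * b * star u ∈ (fun x => u * x * star u) '' (B : Set M) := ⟨b, hb, rfl⟩
  rwa [hu.2] at this

lemma normalizer_star {u : M} (hu : u ∈ normalizer (B : Set M)) :
    star u ∈ normalizer (B : Set M) := by
  refine ⟨Unitary.star_mem hu.1, ?_⟩
  have hu1 := Unitary.star_mul_self_of_mem hu.1
  conv_lhs => rw [← hu.2]
  rw [Set.image_image]
  convert Set.image_id _ using 2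
  funext x
  calc star u * (u * x * star u) * star (star u) = (star u * u) * x * (star u * u) := by
        simp only [star_star, mul_assoc]
    _ = x := by rw [hu1, one_mul, mul_one]

lemma normalizer_mul {u v : M} (hu : u ∈ normalizer (B : Set M)) (hv : v ∈ normalizer (B : Set M)) :
    u * v ∈ normalizer (B : Set M) := by
  refine ⟨mul_mem hu.1 hv.1, ?_⟩
  conv_rhs => rw [← hu.2, ← hv.2]
  rw [Set.image_image]
  simp only [star_mul, mul_assoc]

lemma normalizer_one : (1 : M) ∈ normalizer (B : Set M) :=
  ⟨one_mem _, by simp⟩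

lemma normalizer_conj_cent {u : M} (hu : u ∈ normalizer (B : Set M)) {c : M}
    (hc : c ∈ cent (B : Set M)) : u * c * star u ∈ cent (B : Set M) := by
  have hu1 := Unitary.star_mul_self_of_mem hu.1
  have hu2 := Unitary.mul_star_self_of_mem hu.1
  intro b hb
  have hb' : star u * b * u ∈ B := by simpa using normalizer_conj (normalizer_star hu) hb
  calc u * c * star u * b = u * c * star u * b * (u * star u) := by rw [hu2, mul_one]
    _ = u * (c * (star u * b * u)) * star u := by simp only [mul_assoc]
    _ = (u * star u) * b * (u * c * star u) := by rw [hc _ hb']; simp only [mul_assoc]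
    _ = b * (u * c * star u) := by rw [hu2, one_mul]

/-- The minimal expectation is invariant under conjugation by the normalizer. -/
lemma IsCondExp.conj_invariant (hE : IsCondExp (B : Set M) E) (hl : IsRightQB E l)
    {r₀ : ℝ} (hr : r₀ ≠ 0) (hr₀ : (∑ i, l i * star (l i)) = (r₀ : ℂ) • 1)
    (hF : ∀ z ∈ cent (B : Set M), ∑ i, l i * z * star (l i) = (r₀ : ℂ) • E z)
    {u : M} (hu : u ∈ normalizer (B : Set M)) (x : M) :
    E (u * x * star u) = u * E x * star u := by
  have hu1 := Unitary.star_mul_self_of_mem hu.1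
  have hu2 := Unitary.mul_star_self_of_mem hu.1
  have hconj : ∀ b ∈ B, star u * b * u ∈ B := fun b hb => by
    simpa using normalizer_conj (normalizer_star hu) hb
  let E' : M →ₗ[ℂ] M := LinearMap.mulRight ℂ u ∘ₗ LinearMap.mulLeft ℂ (star u) ∘ₗ E ∘ₗ
    LinearMap.mulRight ℂ (star u) ∘ₗ LinearMap.mulLeft ℂ u
  have hE'a : ∀ y, E' y = star u * E (u * y * star u) * u := fun y => rfl
  have hmul : ∀ a b : M, u * (a * b) * star u = (u * a * star u) * (u * b * star u) := by
    intro a b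
    calc u * (a * b) * star u = u * a * 1 * (b * star u) := by simp only [mul_assoc, one_mul]
      _ = _ := by rw [← hu1]; simp only [mul_assoc]
  have hmul' : ∀ a b : M, star u * (a * b) * u = (star u * a * u) * (star u * b * u) := by
    intro a b
    calc star u * (a * b) * u = star u * a * 1 * (b * u) := by simp only [mul_assoc, one_mul]
      _ = _ := by rw [← hu2]; simp only [mul_assoc]
  have hinv : ∀ a : M, star u * (u * a * star u) * u = a := by
    intro a
    calc star u * (u * a * star u) * u = (star u * u) * a * (star u * u) := by
          simp only [mul_assoc]
      _ = a := by rw [hu1, one_mul, mul_one]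
  have hinv' : ∀ a : M, u * (star u * a * u) * star u = a := by
    intro a
    calc u * (star u * a * u) * star u = (u * star u) * a * (u * star u) := by
          simp only [mul_assoc]
      _ = a := by rw [hu2, one_mul, mul_one]
  have hE' : IsCondExp (B : Set M) E' := by
    refine ⟨fun x => hconj _ (hE.1 _), ?_, ?_, ?_⟩
    · intro b hb
      rw [hE'a, hE.2.1 _ (normalizer_conj hu hb), hinv]
    · intro x
      obtain ⟨y, hy⟩ := hE.2.2.1 (x * star u)
      refine ⟨y * u, ?_⟩
      have : u * (star x * x) * star u = star (x * star u) * (x * star u) := by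
        simp only [star_mul, star_star, mul_assoc]
      rw [hE'a, this, hy]
      simp only [star_mul, mul_assoc]
    · intro b₁ hb₁ b₂ hb₂ x
      rw [hE'a, hE'a, hmul, hmul, hE.2.2.2 _ (normalizer_conj hu hb₁) _ (normalizer_conj hu hb₂),
        hmul', hmul', hinv, hinv]
  have hμ : IsRightQB E' (fun i => star u * l i * u) := by
    intro x
    have : ∀ i, E' (x * (star u * l i * u)) * star (star u * l i * u) =
        star u * (E (u * x * star u * l i) * star (l i)) * u := by
      intro i
      rw [hE'a, hmul, hinv', hmul']
      simp only [star_mul, star_star, mul_assoc]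
    simp only [this]
    rw [← Finset.sum_mul, ← Finset.mul_sum, ← hl, hinv]
  have hμr : ∑ i, (star u * l i * u) * star (star u * l i * u) = (r₀ : ℂ) • 1 := by
    have : ∀ i, (star u * l i * u) * star (star u * l i * u) =
        star u * (l i * star (l i)) * u := by
      intro i
      rw [hmul']
      simp only [star_mul, star_star, mul_assoc]
    simp only [this]
    rw [← Finset.sum_mul, ← Finset.mul_sum, hr₀, mul_smul_comm, smul_mul_assoc, mul_one, hu1]
  have htr : ∀ c ∈ cent (B : Set M), ∀ x, E' (c * x) = E' (x * c) := by
    intro c hc x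
    rw [hE'a, hE'a, hmul, hmul, hE.tracial hl hr hF (normalizer_conj_cent hu hc)]
  have := hE.unique_tracial hl hE' hμ hr hF htr hμr x
  rw [← this, hE'a, hinv']

/-- In a simple algebra generated by the normalizer, any two nonzero elements are linked by some
normalizing unitary. -/
lemma exists_link (hM : IsSimpleCStar (Set.univ : Set M)) (hreg : IsRegular (B : Set M)) {p q : M}
    (hp : p ≠ 0) (hq : q ≠ 0) : ∃ u ∈ normalizer (B : Set M), p * u * q ≠ 0 := by
  by_contra! hcon
  have hall : ∀ a : M, p * a * q = 0 := by
    let S : Submonoid M :=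
      { carrier := normalizer (B : Set M)
        mul_mem' := normalizer_mul
        one_mem' := normalizer_one }
    have hstar : star (normalizer (B : Set M)) ⊆ normalizer (B : Set M) := by
      intro u hu
      simpa using normalizer_star (Set.mem_star.mp hu)
    have hspan : ∀ a ∈ StarAlgebra.adjoin ℂ (normalizer (B : Set M)), p * a * q = 0 := by
      intro a ha
      have h1 : a ∈ Submodule.span ℂ
          (Submonoid.closure (normalizer (B : Set M) ∪ star (normalizer (B : Set M))) : Set M) := by
        rw [← StarAlgebra.adjoin_eq_span]
        exact ha
      have h2 : Submonoid.closure (normalizer (B : Set M) ∪ star (normalizer (B : Set M))) ≤ S :=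
        Submonoid.closure_le.mpr (Set.union_subset (fun _ h => h) hstar)
      clear ha
      induction h1 using Submodule.span_induction with
      | mem x hx => exact hcon x (h2 hx)
      | zero => simp
      | add x y _ _ hx hy => rw [mul_add, add_mul, hx, hy, add_zero]
      | smul c x _ hx => rw [mul_smul_comm, smul_mul_assoc, hx, smul_zero]
    intro a
    have ha : a ∈ closure (StarAlgebra.adjoin ℂ (normalizer (B : Set M)) : Set M) := by
      rw [← StarSubalgebra.topologicalClosure_coe, hreg]
      trivial
    have hcl : IsClosed {a : M | p * a * q = 0} :=
      isClosed_eq (by fun_prop) continuous_const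
    exact closure_minimal (fun a ha => hspan a ha) hcl ha
  rcases hM {x | ∀ a, p * a * x = 0} (Set.subset_univ _)
    (by
      simp only [Set.ofPred_forall]
      exact isClosed_iInter fun a => isClosed_eq (by fun_prop) continuous_const)
    (by simp)
    (fun x hx y hy a => by rw [mul_add, hx, hy, add_zero])
    (fun x hx b _ => ⟨fun a => by rw [← mul_assoc, hx, zero_mul],
      fun a => by rw [← mul_assoc, mul_assoc p a b, hx]⟩) with h | h
  · have : q ∈ ({0} : Set M) := by rw [← h]; exact hall
    exact hq this
  · have : (1 : M) ∈ {x | ∀ a, p * a * x = 0} := by rw [h]; trivial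
    exact hp (by simpa using this 1)

end Trace

/-! ### The centralizer -/

section Main

variable {M : Type*} [CStarAlgebra M] {B : StarSubalgebra ℂ M} {E : M →ₗ[ℂ] M}

lemma mem_centralizer_iff_cent {z : M} :
    z ∈ StarSubalgebra.centralizer ℂ (B : Set M) ↔ z ∈ cent (B : Set M) := by
  rw [StarSubalgebra.mem_centralizer_iff]
  exact ⟨fun h b hb => (h b hb).1.symm,
    fun h b hb => ⟨(h b hb).symm, (h _ (star_mem hb)).symm⟩⟩

lemma isClosed_centralizer :
    IsClosed (StarSubalgebra.centralizer ℂ (B : Set M) : Set M) := by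
  have : (StarSubalgebra.centralizer ℂ (B : Set M) : Set M) =
      ⋂ b ∈ (B : Set M), {z | z * b = b * z} := by
    ext z
    rw [SetLike.mem_coe, mem_centralizer_iff_cent]
    simp [cent]
  rw [this]
  exact isClosed_biInter fun b _ => isClosed_eq (by fun_prop) (by fun_prop)

/-- Conjugation by a normalizing unitary, as an automorphism of the centralizer. -/
noncomputable def conjCentralizer {u : M} (hu : u ∈ normalizer (B : Set M)) :
    StarSubalgebra.centralizer ℂ (B : Set M) ≃⋆ₐ[ℂ] StarSubalgebra.centralizer ℂ (B : Set M) where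
  toFun z := ⟨u * z * star u,
    mem_centralizer_iff_cent.mpr (normalizer_conj_cent hu (mem_centralizer_iff_cent.mp z.2))⟩
  invFun z := ⟨star u * z * u, mem_centralizer_iff_cent.mpr (by
    simpa using normalizer_conj_cent (normalizer_star hu) (mem_centralizer_iff_cent.mp z.2))⟩
  left_inv z := Subtype.ext <| by
    have hu1 := Unitary.star_mul_self_of_mem hu.1
    calc star u * (u * (z : M) * star u) * u = (star u * u) * z * (star u * u) := by
          simp only [mul_assoc]
      _ = z := by rw [hu1, one_mul, mul_one]
  right_inv z := Subtype.ext <| by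
    have hu2 := Unitary.mul_star_self_of_mem hu.1
    calc u * (star u * (z : M) * u) * star u = (u * star u) * z * (u * star u) := by
          simp only [mul_assoc]
      _ = z := by rw [hu2, one_mul, mul_one]
  map_mul' a b := Subtype.ext <| by
    have hu1 := Unitary.star_mul_self_of_mem hu.1
    calc u * ((a : M) * b) * star u = u * a * 1 * (b * star u) := by
          simp only [mul_assoc, one_mul]
      _ = u * a * star u * (u * b * star u) := by rw [← hu1]; simp only [mul_assoc]
  map_add' a b := Subtype.ext <| by
    change u * ((a : M) + b) * star u = u * a * star u + u * b * star u
    rw [mul_add, add_mul]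
  map_star' a := Subtype.ext <| by
    change u * star (a : M) * star u = star (u * a * star u)
    simp only [star_mul, star_star, mul_assoc]
  map_smul' c a := Subtype.ext <| by
    change u * (c • (a : M)) * star u = c • (u * a * star u)
    rw [mul_smul_comm, smul_mul_assoc]

/-- The structural theorem `exists_unitary_basis` applied to the centralizer, with the trace `τ`
determined by `E(z) = τ(z) 1` and the automorphisms given by conjugation with normalizing
unitaries. -/
theorem exists_unitary_quasi_basis [Nontrivial M] (hBc : IsClosed (B : Set M))
    (hM : IsSimpleCStar (Set.univ : Set M)) (hB : IsSimpleCStar (B : Set M))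
    (hreg : IsRegular (B : Set M)) (hmin : IsMinimalCondExp (B : Set M) E) :
    ∃ (n : ℕ) (w : Fin n → M),
      (∀ i, w i ∈ cent (B : Set M) ∧ w i ∈ unitary M) ∧
      (∀ i j, E (star (w i) * w j) = if i = j then (1 : M) else 0) ∧
      (∀ z ∈ cent (B : Set M), z = ∑ i, E (z * w i) * star (w i)) := by
  obtain ⟨hE, r₀, n, l, hl, hr₀, hle⟩ := hmin
  have hF : ∀ z ∈ cent (B : Set M), ∑ i, l i * z * star (l i) = (r₀ : ℂ) • E z :=
    fun z hz => hE.minimal_sum hl hBc hB hM hr₀ hle hz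
  have hr : r₀ ≠ 0 := index_ne_zero hl hr₀
  let C := StarSubalgebra.centralizer ℂ (B : Set M)
  have hC : IsClosed (C : Set M) := isClosed_centralizer
  have hCc : ∀ z : C, (z : M) ∈ cent (B : Set M) := fun z => mem_centralizer_iff_cent.mp z.2
  have hex : ∀ z : C, ∃ c : ℂ, E z = c • (1 : M) := fun z => hE.scalar_of_cent hBc hB (hCc z)
  choose t ht using hex
  let τ : C →ₗ[ℂ] ℂ :=
    { toFun := t
      map_add' := fun x y => scalar_inj (M := M) (by
        rw [← ht, add_smul, ← ht, ← ht, ← map_add]; rfl)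
      map_smul' := fun c x => scalar_inj (M := M) (by
        rw [← ht, RingHom.id_apply, smul_eq_mul, mul_smul, ← ht, ← map_smul]; rfl) }
  have hτ : ∀ z : C, E z = τ z • (1 : M) := ht
  have hpos : ∀ x : C, 0 ≤ (τ (star x * x)).re ∧ τ (star x * x) = ((τ (star x * x)).re : ℂ) := by
    intro x
    obtain ⟨y, hy⟩ := hE.2.2.1 (x : M)
    refine scalar_nonneg (M := M) (y := y) ?_
    rw [← hτ, ← hy]; rfl
  obtain ⟨K, hK⟩ := hE.pimsner_popa hl
  have htrace : IsBoundingTrace τ K :=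
    { map_one := scalar_inj (M := M) (by
        rw [← hτ, one_smul]; exact hE.map_one)
      comm := fun x y => scalar_inj (M := M) (by
        rw [← hτ, ← hτ]; exact hE.tracial hl hr hF (hCc x) y)
      im_zero := fun x => by rw [(hpos x).2]; simp
      re_nonneg := fun x => (hpos x).1
      bound := fun x => by
        have h1 := hK x
        have h2 : E (star (x : M) * x) = τ (star x * x) • (1 : M) := hτ (star x * x)
        rw [h2, norm_smul, norm_one, mul_one, (hpos x).2, Complex.norm_real,
          Real.norm_of_nonneg (hpos x).1] at h1
        exact h1 }
  obtain ⟨m, w, hw1, hw2, hw3⟩ := exists_unitary_basis htrace (by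
    intro p q hp hq
    obtain ⟨u, hu, hpq⟩ := exists_link hM hreg (p := (p : M)) (q := (q : M))
      (by simpa using hp.2.1) (by simpa using hq.2.1)
    refine ⟨conjCentralizer hu, fun x => ?_, fun h0 => ?_⟩
    · refine scalar_inj (M := M) ?_
      rw [← hτ]
      change E (u * x * star u) = _
      rw [hE.conj_invariant hl hr hr₀ hF hu, hτ, mul_smul_comm, smul_mul_assoc, mul_one,
        Unitary.mul_star_self_of_mem hu.1]
    · have h1 : (p : M) * (u * q * star u) = 0 := congrArg Subtype.val h0
      apply hpq
      calc (p : M) * u * q = p * (u * q * star u) * u := by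
            simp only [mul_assoc, Unitary.star_mul_self_of_mem hu.1, mul_one]
        _ = 0 := by rw [h1, zero_mul])
  refine ⟨m, fun i => w i, fun i => ⟨hCc _, ?_⟩, fun i j => ?_, fun z hz => ?_⟩
  · have := Unitary.mem_iff.mp (hw1 i)
    exact Unitary.mem_iff.mpr ⟨congrArg Subtype.val this.1, congrArg Subtype.val this.2⟩
  · have h1 : E (star (w i : M) * w j) = τ (star (w i) * w j) • (1 : M) := hτ (star (w i) * w j)
    rw [h1, hw2]
    split_ifs <;> simp
  · have h1 := congrArg Subtype.val (hw3 ⟨z, mem_centralizer_iff_cent.mpr hz⟩)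
    rw [AddSubmonoidClass.coe_finsetSum] at h1
    refine h1.trans (Finset.sum_congr rfl fun i _ => ?_)
    have h2 : E (z * w i) = τ (⟨z, mem_centralizer_iff_cent.mpr hz⟩ * w i) • (1 : M) :=
      hτ (⟨z, mem_centralizer_iff_cent.mpr hz⟩ * w i)
    rw [h2, smul_mul_assoc, one_mul]
    rfl

end Main

/-- for a regular inclusion `B ⊂ A` of simple unital C*-algebras with a
finite-index conditional expectation and minimal conditional expectation `E₀`, `E₀` maps
`C_A(B)` into `ℂ·1` and the induced faithful tracial state `τ₀` on `C_A(B)` admits a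
unitary orthonormal quasi-basis. -/
theorem tau0_has_unitary_ON_quasi_basis
    (B : StarSubalgebra ℂ A) (hBclosed : IsClosed (B : Set A))
    (hAsimple : IsSimpleCStar (Set.univ : Set A))
    (hBsimple : IsSimpleCStar (B : Set A))
    (hreg : IsRegular (B : Set A))
    (E : A →ₗ[ℂ] A) (hE : IsCondExp (B : Set A) E)
    (nE : ℕ) (lE : Fin nE → A) (hlE : IsRightQB E lE)
    (E₀ : A →ₗ[ℂ] A) (hE₀ : IsMinimalCondExp (B : Set A) E₀) :
    (∀ z ∈ cent (B : Set A), ∃ c : ℂ, E₀ z = c • (1 : A)) ∧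
    ∃ (n : ℕ) (w : Fin n → A),
      (∀ i, w i ∈ cent (B : Set A) ∧ w i ∈ unitary A) ∧
      (∀ i j, E₀ (star (w i) * w j) = if i = j then (1 : A) else 0) ∧
      (∀ z ∈ cent (B : Set A), z = ∑ i, E₀ (z * w i) * star (w i)) := by
  let _ : CStarAlgebra A := {}
  rcases subsingleton_or_nontrivial A with hA | hA
  · exact ⟨fun z _ => ⟨0, Subsingleton.elim _ _⟩, 0, Fin.elim0, fun i => i.elim0,
      fun i => i.elim0, fun z _ => Subsingleton.elim _ _⟩
  · exact ⟨fun z hz => hE₀.1.scalar_of_cent hBclosed hBsimple hz,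
      exists_unitary_quasi_basis hBclosed hAsimple hBsimple hreg hE₀⟩

end RegularInclusion
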